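/- There exists a constant C > 0, depending only on Ω, ω₀, ω and η⁰, such that for every T > 0, every bounded measurable potential a, and every classical nonnegative solution q of the adjoint heat equation with Neumann boundary condition, one has ∫_Ω q(0,x)² dx ≤ exp(C(1 + 1/T + T‖a‖_∞ + ‖a‖_∞^{1/2})) ∫₀^T ∫_ω q(t,x)² dx dt. -/

import Mathlib

open MeasureTheory Real Set RealInnerProductSpace

noncomputable def spaceLaplacian {N : ℕ} (f : EuclideanSpace ℝ (Fin N) → ℝ)
    (x : EuclideanSpace ℝ (Fin N)) : ℝ :=
  ∑ i : Fin N, fderiv ℝ (fun y => fderiv ℝ f y (EuclideanSpace.single i 1)) x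
    (EuclideanSpace.single i 1)

lemma aux_integrableOn {N : ℕ} {Ω : Set (EuclideanSpace ℝ (Fin N))}
    (hΩb : Bornology.IsBounded Ω) {f : EuclideanSpace ℝ (Fin N) → ℝ}
    (hf : ContinuousOn f (closure Ω)) : IntegrableOn f Ω :=
  (hf.integrableOn_compact hΩb.isCompact_closure).mono_set subset_closure

lemma aux_cutoff_zero {N : ℕ} {Ω : Set (EuclideanSpace ℝ (Fin N))}
    (hΩo : IsOpen Ω) {η : EuclideanSpace ℝ (Fin N) → ℝ} (hη : Continuous η)
    (hηbd : ∀ x ∈ frontier Ω, η x = 0) {χ : ℝ → ℝ} {ε : ℝ} (hε : 0 < ε)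
    (hχ0 : ∀ r ≤ ε, χ r = 0) {x : EuclideanSpace ℝ (Fin N)} (hx : x ∉ Ω) :
    (Ω.indicator (fun y => χ (η y))) =ᶠ[nhds x] 0 := by
  by_cases hc : x ∈ closure Ω
  · have hfr : x ∈ frontier Ω := by
      rw [hΩo.frontier_eq]; exact ⟨hc, hx⟩
    have h1 : ∀ᶠ y in nhds x, η y < ε :=
      hη.continuousAt.eventually_lt continuousAt_const (by rw [hηbd x hfr]; exact hε)
    filter_upwards [h1] with y hy
    simp [Set.indicator, hχ0 _ hy.le]
  · have h1 : ∀ᶠ y in nhds x, y ∈ (closure Ω)ᶜ :=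
      isClosed_closure.isOpen_compl.mem_nhds hc
    filter_upwards [h1] with y hy
    have : y ∉ Ω := fun h => hy (subset_closure h)
    simp [this]

lemma aux_ibp {N : ℕ} {Ω : Set (EuclideanSpace ℝ (Fin N))}
    (hΩo : IsOpen Ω) (hΩb : Bornology.IsBounded Ω)
    {η : EuclideanSpace ℝ (Fin N) → ℝ} (hη : ContDiff ℝ 2 η)
    (hηbd : ∀ x ∈ frontier Ω, η x = 0) {χ : ℝ → ℝ} {ε : ℝ} (hε : 0 < ε)
    (hχ : ContDiff ℝ 1 χ)
    (hχ0 : ∀ r ≤ ε, χ r = 0) (v : EuclideanSpace ℝ (Fin N))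
    {G D : EuclideanSpace ℝ (Fin N) → ℝ} (hG : ContinuousOn G (closure Ω))
    (hD : ContinuousOn D (closure Ω))
    (hGD : ∀ x ∈ Ω, HasLineDerivAt ℝ G (D x) x v) :
    ∫ x in Ω, χ (η x) * D x = - ∫ x in Ω, deriv χ (η x) * (G x * fderiv ℝ η x v) := by
  set c : EuclideanSpace ℝ (Fin N) → ℝ := Ω.indicator (fun y => χ (η y)) with hc
  set c' : EuclideanSpace ℝ (Fin N) → ℝ := Ω.indicator (fun y => deriv χ (η y) * fderiv ℝ η y v)
    with hc'
  have hηc : Continuous η := hη.continuous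
  have hdη : Continuous (fderiv ℝ η) := hη.continuous_fderiv (by norm_num)
  have hdχ : Continuous (deriv χ) := hχ.continuous_deriv (by norm_num)
  have hdηv : Continuous (fun y => fderiv ℝ η y v) := hdη.clm_apply continuous_const
  have hcd : ∀ x, HasLineDerivAt ℝ c (c' x) x v := by
    intro x
    by_cases hx : x ∈ Ω
    · have h1 : HasFDerivAt (fun y => χ (η y)) (deriv χ (η x) • fderiv ℝ η x) x :=
        ((hχ.differentiable (by norm_num)) (η x)).hasDerivAt.comp_hasFDerivAt x
          ((hη.differentiable (by norm_num)) x).hasFDerivAt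
      have h2 : HasFDerivAt c (deriv χ (η x) • fderiv ℝ η x) x := by
        refine h1.congr_of_eventuallyEq ?_
        filter_upwards [hΩo.mem_nhds hx] with y hy
        simp [hc, hy]
      have := h2.hasLineDerivAt v
      simpa [hc', hx] using this
    · have h0 := aux_cutoff_zero hΩo hηc hηbd hε hχ0 hx
      have h2 : HasFDerivAt c (0 : EuclideanSpace ℝ (Fin N) →L[ℝ] ℝ) x :=
        (hasFDerivAt_const (0:ℝ) x).congr_of_eventuallyEq h0
      have := h2.hasLineDerivAt v
      simpa [hc', hx] using this
  have hsupp : ∀ x ∈ tsupport c, x ∈ Ω := by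
    intro x hx
    by_contra hxn
    exact (notMem_tsupport_iff_eventuallyEq.2 (aux_cutoff_zero hΩo hηc hηbd hε hχ0 hxn)) hx
  have hm := hΩo.measurableSet
  have key := integral_bilinear_hasLineDerivAt_right_eq_neg_left_of_integrable
    (μ := (volume : Measure (EuclideanSpace ℝ (Fin N)))) (f := c) (f' := c') (g := G) (g' := D) (v := v)
    (B := ContinuousLinearMap.mul ℝ ℝ) ?_ ?_ ?_ (fun x _ => hcd x) (fun x hx => hGD x (hsupp x hx))
  · simp only [ContinuousLinearMap.mul_apply'] at key
    have e1 : ∀ x, c x * D x = Ω.indicator (fun y => χ (η y) * D y) x := by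
      intro x; by_cases hx : x ∈ Ω <;> simp [hc, hx]
    have e2 : ∀ x, c' x * G x = Ω.indicator (fun y => deriv χ (η y) * (G y * fderiv ℝ η y v)) x := by
      intro x; by_cases hx : x ∈ Ω
      · simp [hc', hx]; ring
      · simp [hc', hx]
    simp only [e1, e2, integral_indicator hm] at key
    exact key
  · simp only [ContinuousLinearMap.mul_apply']
    have e2 : (fun x => c' x * G x) = Ω.indicator (fun y => deriv χ (η y) * fderiv ℝ η y v * G y) := by
      ext x; by_cases hx : x ∈ Ω <;> simp [hc', hx]
    rw [e2, integrable_indicator_iff hm]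
    exact aux_integrableOn hΩb (((hdχ.comp hηc).mul hdηv).continuousOn.mul hG)
  · simp only [ContinuousLinearMap.mul_apply']
    have e2 : (fun x => c x * D x) = Ω.indicator (fun y => χ (η y) * D y) := by
      ext x; by_cases hx : x ∈ Ω <;> simp [hc, hx]
    rw [e2, integrable_indicator_iff hm]
    exact aux_integrableOn hΩb ((hχ.continuous.comp hηc).continuousOn.mul hD)
  · simp only [ContinuousLinearMap.mul_apply']
    have e2 : (fun x => c x * G x) = Ω.indicator (fun y => χ (η y) * G y) := by
      ext x; by_cases hx : x ∈ Ω <;> simp [hc, hx]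
    rw [e2, integrable_indicator_iff hm]
    exact aux_integrableOn hΩb ((hχ.continuous.comp hηc).continuousOn.mul hG)

lemma aux_div_strict {N : ℕ} {Ω : Set (EuclideanSpace ℝ (Fin N))}
    (hΩo : IsOpen Ω) (hΩb : Bornology.IsBounded Ω)
    {η : EuclideanSpace ℝ (Fin N) → ℝ} (hη : ContDiff ℝ 2 η)
    (hηpos : ∀ x ∈ Ω, 0 < η x) (hηbd : ∀ x ∈ frontier Ω, η x = 0)
    {G D : Fin N → EuclideanSpace ℝ (Fin N) → ℝ} (hG : ∀ i, ContinuousOn (G i) (closure Ω))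
    (hD : ∀ i, ContinuousOn (D i) (closure Ω))
    (hGD : ∀ i, ∀ x ∈ Ω, HasLineDerivAt ℝ (G i) (D i x) x (EuclideanSpace.single i 1))
    (hbd : ∀ x ∈ frontier Ω, ∑ i, G i x * fderiv ℝ η x (EuclideanSpace.single i 1) < 0) :
    0 ≤ ∫ x in Ω, ∑ i, D i x := by
  have hdη : Continuous (fderiv ℝ η) := hη.continuous_fderiv (by norm_num)
  set H : EuclideanSpace ℝ (Fin N) → ℝ :=
    fun x => ∑ i, G i x * fderiv ℝ η x (EuclideanSpace.single i 1) with hH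
  have hHc : ContinuousOn H (closure Ω) := by
    refine continuousOn_finsetSum _ fun i _ => (hG i).mul ?_
    exact (hdη.clm_apply continuous_const).continuousOn
  have hηc : Continuous η := hη.continuous
  obtain ⟨ρ, hρ, hρH⟩ : ∃ ρ > 0, ∀ x ∈ Ω, η x < ρ → H x ≤ 0 := by
    set K := closure Ω ∩ H ⁻¹' (Ici 0) with hK
    have hKc : IsCompact K :=
      hΩb.isCompact_closure.of_isClosed_subset
        (hHc.preimage_isClosed_of_isClosed isClosed_closure isClosed_Ici) inter_subset_left
    rcases K.eq_empty_or_nonempty with h0 | h0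
    · refine ⟨1, one_pos, fun x hx _ => ?_⟩
      by_contra hcon
      have : x ∈ K := ⟨subset_closure hx, (not_le.1 hcon).le⟩
      rw [h0] at this; exact this
    · obtain ⟨x0, hx0, hmin⟩ := hKc.exists_isMinOn h0 hηc.continuousOn
      refine ⟨η x0, ?_, fun x hx hlt => ?_⟩
      · apply hηpos
        by_contra hcon
        have hfr : x0 ∈ frontier Ω := by
          rw [hΩo.frontier_eq]; exact ⟨hx0.1, hcon⟩
        exact absurd (hbd x0 hfr) (not_lt.2 hx0.2)
      · by_contra hcon
        have : x ∈ K := ⟨subset_closure hx, (not_le.1 hcon).le⟩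
        exact absurd (hmin this) (not_le.2 hlt)
  let χ : ℕ → ℝ → ℝ := fun n r => smoothTransition ((n + 1 : ℝ) * r - 1)
  have hχC : ∀ n, ContDiff ℝ 1 (χ n) := fun n =>
    smoothTransition.contDiff.comp ((contDiff_const.mul contDiff_id).sub contDiff_const)
  have hχmono : ∀ n, Monotone (χ n) := fun n a b hab =>
    smoothTransition.monotone (by
      have : (n + 1 : ℝ) * a ≤ (n + 1 : ℝ) * b := mul_le_mul_of_nonneg_left hab (by positivity)
      linarith)
  have hχ0 : ∀ n : ℕ, ∀ r ≤ 1 / (n + 1 : ℝ), χ n r = 0 := fun n r hr =>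
    smoothTransition.zero_of_nonpos (by
      rw [le_div_iff₀ (by positivity)] at hr; linarith)
  have hχ1 : ∀ n : ℕ, ∀ r, 2 / (n + 1 : ℝ) ≤ r → χ n r = 1 := fun n r hr =>
    smoothTransition.one_of_one_le (by
      rw [div_le_iff₀ (by positivity)] at hr; linarith)
  have hstep : ∀ n : ℕ, 2 / (n + 1 : ℝ) < ρ → 0 ≤ ∫ x in Ω, χ n (η x) * ∑ i, D i x := by
    intro n hn
    have e1 : ∫ x in Ω, χ n (η x) * ∑ i, D i x = ∑ i, ∫ x in Ω, χ n (η x) * D i x := by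
      simp_rw [Finset.mul_sum]
      rw [integral_finsetSum]
      exact fun i _ => aux_integrableOn hΩb (((hχC n).continuous.comp hηc).continuousOn.mul (hD i))
    have e2 : ∑ i, ∫ x in Ω, χ n (η x) * D i x = - ∫ x in Ω, deriv (χ n) (η x) * H x := by
      simp_rw [hH, Finset.mul_sum]
      rw [integral_finsetSum, ← Finset.sum_neg_distrib]
      · refine Finset.sum_congr rfl fun i _ => ?_
        exact aux_ibp hΩo hΩb hη hηbd (by positivity : (0:ℝ) < 1 / (n + 1 : ℝ)) (hχC n) (hχ0 n) _
          (hG i) (hD i) (hGD i)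
      · exact fun i _ => aux_integrableOn hΩb
          ((((hχC n).continuous_deriv (by norm_num)).comp hηc).continuousOn.mul ((hG i).mul
            (hdη.clm_apply continuous_const).continuousOn))
    rw [e1, e2, Right.nonneg_neg_iff]
    refine setIntegral_nonpos hΩo.measurableSet fun x hx => ?_
    rcases lt_or_ge (η x) ρ with h | h
    · exact mul_nonpos_of_nonneg_of_nonpos ((hχmono n).deriv_nonneg) (hρH x hx h)
    · have : χ n =ᶠ[nhds (η x)] fun _ => 1 := by
        filter_upwards [lt_mem_nhds (lt_of_lt_of_le hn h)] with r hr
        exact hχ1 n r hr.le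
      rw [this.deriv_eq]; simp
  have hSc : ContinuousOn (fun x => ∑ i, D i x) (closure Ω) :=
    continuousOn_finsetSum _ fun i _ => hD i
  have hlim : Filter.Tendsto (fun n => ∫ x in Ω, χ n (η x) * ∑ i, D i x) Filter.atTop
      (nhds (∫ x in Ω, ∑ i, D i x)) := by
    refine tendsto_integral_of_dominated_convergence (fun x => |∑ i, D i x|) ?_ ?_ ?_ ?_
    · exact fun n => (aux_integrableOn hΩb
        (((hχC n).continuous.comp hηc).continuousOn.mul hSc)).aestronglyMeasurable
    · exact (aux_integrableOn hΩb hSc).abs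
    · intro n
      refine Filter.Eventually.of_forall fun x => ?_
      rw [norm_mul, Real.norm_eq_abs, Real.norm_eq_abs]
      have h1 : |χ n (η x)| ≤ 1 := by
        rw [abs_of_nonneg (smoothTransition.nonneg _)]; exact smoothTransition.le_one _
      exact mul_le_of_le_one_left (abs_nonneg _) h1
    · refine (ae_restrict_mem hΩo.measurableSet).mono fun x hx => ?_
      refine tendsto_const_nhds.congr' ?_
      obtain ⟨n0, hn0⟩ := exists_nat_gt (2 / η x)
      filter_upwards [Filter.eventually_ge_atTop n0] with n hn
      rw [hχ1 n (η x), one_mul]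
      have hp := hηpos x hx
      rw [div_lt_iff₀ hp] at hn0
      rw [div_le_iff₀ (by positivity)]
      have : (n0:ℝ) ≤ n := by exact_mod_cast hn
      nlinarith
  refine ge_of_tendsto hlim ?_
  obtain ⟨n0, hn0⟩ := exists_nat_gt (2 / ρ)
  filter_upwards [Filter.eventually_ge_atTop n0] with n hn
  apply hstep
  rw [div_lt_iff₀ hρ] at hn0
  rw [div_lt_iff₀ (by positivity)]
  have : (n0:ℝ) ≤ n := by exact_mod_cast hn
  nlinarith

lemma aux_hess {N : ℕ} {f : EuclideanSpace ℝ (Fin N) → ℝ} {x : EuclideanSpace ℝ (Fin N)}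
    (h : DifferentiableAt ℝ (fderiv ℝ f) x) (v : EuclideanSpace ℝ (Fin N)) :
    HasFDerivAt (fun y => fderiv ℝ f y v) ((fderiv ℝ (fderiv ℝ f) x).flip v) x := by
  have := h.hasFDerivAt.clm_apply (hasFDerivAt_const v x)
  simpa using this

lemma aux_div_nonneg {N : ℕ} {Ω : Set (EuclideanSpace ℝ (Fin N))}
    (hΩo : IsOpen Ω) (hΩb : Bornology.IsBounded Ω)
    {η : EuclideanSpace ℝ (Fin N) → ℝ} (hη : ContDiff ℝ 2 η)
    (hηpos : ∀ x ∈ Ω, 0 < η x) (hηbd : ∀ x ∈ frontier Ω, η x = 0)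
    (hηfr : ∀ x ∈ frontier Ω, 0 < ∑ i, (fderiv ℝ η x (EuclideanSpace.single i 1)) ^ 2)
    {G D : Fin N → EuclideanSpace ℝ (Fin N) → ℝ} (hG : ∀ i, ContinuousOn (G i) (closure Ω))
    (hD : ∀ i, ContinuousOn (D i) (closure Ω))
    (hGD : ∀ i, ∀ x ∈ Ω, HasLineDerivAt ℝ (G i) (D i x) x (EuclideanSpace.single i 1))
    (hbd : ∀ x ∈ frontier Ω, ∑ i, G i x * fderiv ℝ η x (EuclideanSpace.single i 1) ≤ 0) :
    0 ≤ ∫ x in Ω, ∑ i, D i x := by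
  have hη1 : ContDiff ℝ 1 (fderiv ℝ η) := hη.fderiv_right (by norm_num)
  have hdη : Continuous (fderiv ℝ η) := hη1.continuous
  have hddη : Continuous (fderiv ℝ (fderiv ℝ η)) := hη1.continuous_fderiv (by norm_num)
  set P : Fin N → EuclideanSpace ℝ (Fin N) → ℝ := fun i x => fderiv ℝ η x (EuclideanSpace.single i 1)
  set R : Fin N → EuclideanSpace ℝ (Fin N) → ℝ := fun i x =>
    fderiv ℝ (fderiv ℝ η) x (EuclideanSpace.single i 1) (EuclideanSpace.single i 1)
  have hP : ∀ i, Continuous (P i) := fun i => hdη.clm_apply continuous_const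
  have hR : ∀ i, Continuous (R i) := fun i =>
    (hddη.clm_apply continuous_const).clm_apply continuous_const
  have hmain : ∀ σ : ℝ, 0 < σ →
      0 ≤ (∫ x in Ω, ∑ i, D i x) - σ * ∫ x in Ω, ∑ i, R i x := by
    intro σ hσ
    have := aux_div_strict hΩo hΩb hη hηpos hηbd (G := fun i x => G i x - σ * P i x)
      (D := fun i x => D i x - σ * R i x)
      (fun i => (hG i).sub (continuous_const.mul (hP i)).continuousOn)
      (fun i => (hD i).sub (continuous_const.mul (hR i)).continuousOn) ?_ ?_
    · simp_rw [Finset.sum_sub_distrib, ← Finset.mul_sum] at this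
      rw [integral_sub, integral_const_mul] at this
      · exact this
      · exact aux_integrableOn hΩb (continuousOn_finsetSum _ fun i _ => hD i)
      · exact (aux_integrableOn hΩb (continuous_finsetSum _ fun i _ => hR i).continuousOn).const_mul _
    · intro i x hx
      have h1 : HasLineDerivAt ℝ (P i) (R i x) x (EuclideanSpace.single i 1) := by
        have := (aux_hess ((hη1.differentiable (by norm_num)) x)
          (EuclideanSpace.single i 1)).hasLineDerivAt (EuclideanSpace.single i 1)
        simpa using this
      have h2 := hGD i x hx
      unfold HasLineDerivAt at *
      exact h2.sub (h1.const_mul σ)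
    · intro x hx
      have h1 := hbd x hx
      have h2 := hηfr x hx
      have : ∑ i, (G i x - σ * P i x) * fderiv ℝ η x (EuclideanSpace.single i 1)
          = ∑ i, G i x * fderiv ℝ η x (EuclideanSpace.single i 1)
            - σ * ∑ i, (fderiv ℝ η x (EuclideanSpace.single i 1)) ^ 2 := by
        rw [Finset.mul_sum, ← Finset.sum_sub_distrib]
        exact Finset.sum_congr rfl fun i _ => by simp only [P]; ring
      rw [this]
      have := mul_pos hσ h2
      linarith
  set I := ∫ x in Ω, ∑ i, D i x
  set J := ∫ x in Ω, ∑ i, R i x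
  by_contra hcon
  push Not at hcon
  have h := hmain (-I / (2 * (|J| + 1))) (by
    have := abs_nonneg J
    apply div_pos <;> linarith)
  have hJ := abs_nonneg J
  have h3 : -I / (2 * (|J| + 1)) * J ≥ I / 2 := by
    have h4 : -J ≤ |J| + 1 := by linarith [neg_abs_le J]
    rw [ge_iff_le, div_mul_eq_mul_div, le_div_iff₀ (by positivity)]
    nlinarith
  linarith

structure DomHyp {N : ℕ} (Ω ω₀ : Set (EuclideanSpace ℝ (Fin N)))
    (η : EuclideanSpace ℝ (Fin N) → ℝ) : Prop where
  o : IsOpen Ω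
  b : Bornology.IsBounded Ω
  o0 : IsOpen ω₀
  sub : closure ω₀ ⊆ Ω
  C2 : ContDiff ℝ 2 η
  pos : ∀ x ∈ Ω, 0 < η x
  bd : ∀ x ∈ frontier Ω, η x = 0
  gr : ∀ x ∈ closure (Ω \ ω₀), 0 < ‖gradient η x‖

structure C2cl {N : ℕ} (Ω : Set (EuclideanSpace ℝ (Fin N)))
    (f : EuclideanSpace ℝ (Fin N) → ℝ) : Prop where
  d1 : ∀ x ∈ closure Ω, DifferentiableAt ℝ f x
  d2 : ∀ x ∈ closure Ω, DifferentiableAt ℝ (fderiv ℝ f) x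
  c1 : ContinuousOn (fderiv ℝ f) (closure Ω)
  c2 : ContinuousOn (fderiv ℝ (fderiv ℝ f)) (closure Ω)

lemma aux_grad_apply {N : ℕ} {f : EuclideanSpace ℝ (Fin N) → ℝ} {x : EuclideanSpace ℝ (Fin N)}
    (i : Fin N) : gradient f x i = fderiv ℝ f x (EuclideanSpace.single i 1) := by
  have h : ⟪gradient f x, EuclideanSpace.single i (1:ℝ)⟫ = fderiv ℝ f x (EuclideanSpace.single i 1) := by
    simp [gradient]
  rw [← h, EuclideanSpace.inner_single_right]; simp

lemma aux_grad_inner {N : ℕ} (f g : EuclideanSpace ℝ (Fin N) → ℝ) (x : EuclideanSpace ℝ (Fin N)) :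
    ⟪gradient f x, gradient g x⟫ = ∑ i, fderiv ℝ f x (EuclideanSpace.single i 1) *
      fderiv ℝ g x (EuclideanSpace.single i 1) := by
  rw [PiLp.inner_apply]
  refine Finset.sum_congr rfl fun i _ => ?_
  rw [aux_grad_apply, aux_grad_apply]
  simp [mul_comm]

lemma aux_norm_grad {N : ℕ} (f : EuclideanSpace ℝ (Fin N) → ℝ) (x : EuclideanSpace ℝ (Fin N)) :
    ‖gradient f x‖ = ‖fderiv ℝ f x‖ := by
  simp [gradient]

lemma aux_norm_sq {N : ℕ} (f : EuclideanSpace ℝ (Fin N) → ℝ) (x : EuclideanSpace ℝ (Fin N)) :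
    ‖fderiv ℝ f x‖ ^ 2 = ∑ i, (fderiv ℝ f x (EuclideanSpace.single i 1)) ^ 2 := by
  rw [← aux_norm_grad, ← real_inner_self_eq_norm_sq, aux_grad_inner]
  simp [sq]

lemma DomHyp.gfr {N : ℕ} {Ω ω₀ : Set (EuclideanSpace ℝ (Fin N))}
    {η : EuclideanSpace ℝ (Fin N) → ℝ} (h : DomHyp Ω ω₀ η) :
    ∀ x ∈ frontier Ω, 0 < ∑ i, (fderiv ℝ η x (EuclideanSpace.single i 1)) ^ 2 := by
  intro x hx
  rw [← aux_norm_sq, ← aux_norm_grad]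
  have : x ∈ closure (Ω \ ω₀) := by
    have hx' := hx
    rw [h.o.frontier_eq] at hx'
    rw [mem_closure_iff_nhds]
    intro t ht
    have h2 : (closure ω₀)ᶜ ∈ nhds x :=
      isClosed_closure.isOpen_compl.mem_nhds fun hc => hx'.2 (h.sub hc)
    obtain ⟨y, hy1, hy2⟩ := mem_closure_iff_nhds.1 hx'.1 _ (Filter.inter_mem ht h2)
    exact ⟨y, hy1.1, hy2, fun hc => hy1.2 (subset_closure hc)⟩
  have := h.gr x this
  positivity

lemma C2cl.lap {N : ℕ} {Ω : Set (EuclideanSpace ℝ (Fin N))}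
    {f : EuclideanSpace ℝ (Fin N) → ℝ} (hf : C2cl Ω f) {x} (hx : x ∈ closure Ω) :
    spaceLaplacian f x = ∑ i, fderiv ℝ (fderiv ℝ f) x (EuclideanSpace.single i 1)
      (EuclideanSpace.single i 1) := by
  unfold spaceLaplacian
  refine Finset.sum_congr rfl fun i _ => ?_
  rw [(aux_hess (hf.d2 x hx) _).fderiv]; simp

lemma C2cl.lap_cont {N : ℕ} {Ω : Set (EuclideanSpace ℝ (Fin N))}
    {f : EuclideanSpace ℝ (Fin N) → ℝ} (hf : C2cl Ω f) :
    ContinuousOn (spaceLaplacian f) (closure Ω) := by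
  refine ContinuousOn.congr ?_ (fun x hx => hf.lap hx)
  refine continuousOn_finsetSum _ fun i _ => ?_
  exact (hf.c2.clm_apply continuousOn_const).clm_apply continuousOn_const

lemma C2cl.cont {N : ℕ} {Ω : Set (EuclideanSpace ℝ (Fin N))}
    {f : EuclideanSpace ℝ (Fin N) → ℝ} (hf : C2cl Ω f) : ContinuousOn f (closure Ω) :=
  fun x hx => (hf.d1 x hx).continuousAt.continuousWithinAt

lemma C2cl.of {N : ℕ} {Ω : Set (EuclideanSpace ℝ (Fin N))}
    {η : EuclideanSpace ℝ (Fin N) → ℝ} (hη : ContDiff ℝ 2 η) : C2cl Ω η := by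
  have hη1 : ContDiff ℝ 1 (fderiv ℝ η) := hη.fderiv_right (by norm_num)
  exact ⟨fun x _ => (hη.differentiable (by norm_num)) x,
    fun x _ => (hη1.differentiable (by norm_num)) x, hη1.continuous.continuousOn,
    (hη1.continuous_fderiv (by norm_num)).continuousOn⟩

/-- weighted divergence: sign version. -/
lemma aux_green_nonneg {N : ℕ} {Ω ω₀ : Set (EuclideanSpace ℝ (Fin N))}
    {η : EuclideanSpace ℝ (Fin N) → ℝ} (h : DomHyp Ω ω₀ η)
    {f : EuclideanSpace ℝ (Fin N) → ℝ} (hf : C2cl Ω f)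
    {w : EuclideanSpace ℝ (Fin N) → ℝ}
    {w' : EuclideanSpace ℝ (Fin N) → (EuclideanSpace ℝ (Fin N) →L[ℝ] ℝ)}
    (hw : ContinuousOn w (closure Ω)) (hw' : ContinuousOn w' (closure Ω))
    (hww : ∀ x ∈ Ω, HasFDerivAt w (w' x) x)
    (hbd : ∀ x ∈ frontier Ω, w x * ⟪gradient f x, gradient η x⟫ ≤ 0) :
    0 ≤ ∫ x in Ω, (w x * spaceLaplacian f x +
      ∑ i, w' x (EuclideanSpace.single i 1) * fderiv ℝ f x (EuclideanSpace.single i 1)) := by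
  have hP : ∀ i, ContinuousOn (fun x => fderiv ℝ f x (EuclideanSpace.single i 1)) (closure Ω) :=
    fun i => hf.c1.clm_apply continuousOn_const
  have hQ : ∀ i, ContinuousOn (fun x => w' x (EuclideanSpace.single i 1)) (closure Ω) :=
    fun i => hw'.clm_apply continuousOn_const
  have hR : ∀ i, ContinuousOn (fun x => fderiv ℝ (fderiv ℝ f) x (EuclideanSpace.single i 1)
      (EuclideanSpace.single i 1)) (closure Ω) :=
    fun i => (hf.c2.clm_apply continuousOn_const).clm_apply continuousOn_const
  have key := aux_div_nonneg h.o h.b h.C2 h.pos h.bd h.gfr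
    (G := fun i x => w x * fderiv ℝ f x (EuclideanSpace.single i 1))
    (D := fun i x => w x * fderiv ℝ (fderiv ℝ f) x (EuclideanSpace.single i 1)
      (EuclideanSpace.single i 1) + w' x (EuclideanSpace.single i 1) *
        fderiv ℝ f x (EuclideanSpace.single i 1))
    (fun i => hw.mul (hP i)) (fun i => (hw.mul (hR i)).add ((hQ i).mul (hP i))) ?_ ?_
  · refine key.trans_eq (setIntegral_congr_fun h.o.measurableSet fun x hx => ?_)
    rw [Finset.sum_add_distrib, ← Finset.mul_sum, ← hf.lap (subset_closure hx)]
  · intro i x hx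
    have h1 := (hww x hx).mul (aux_hess (hf.d2 x (subset_closure hx)) (EuclideanSpace.single i 1))
    have := h1.hasLineDerivAt (EuclideanSpace.single i 1)
    have e : (w x • (fderiv ℝ (fderiv ℝ f) x).flip (EuclideanSpace.single i 1) +
        (fderiv ℝ f x) (EuclideanSpace.single i 1) • w' x) (EuclideanSpace.single i 1) =
        w x * fderiv ℝ (fderiv ℝ f) x (EuclideanSpace.single i 1) (EuclideanSpace.single i 1)
          + w' x (EuclideanSpace.single i 1) * fderiv ℝ f x (EuclideanSpace.single i 1) := by
      simp [mul_comm]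
    rw [e] at this
    exact this
  · intro x hx
    have := hbd x hx
    rw [aux_grad_inner, Finset.mul_sum] at this
    simpa only [mul_assoc] using this

lemma aux_green_zero {N : ℕ} {Ω ω₀ : Set (EuclideanSpace ℝ (Fin N))}
    {η : EuclideanSpace ℝ (Fin N) → ℝ} (h : DomHyp Ω ω₀ η)
    {f : EuclideanSpace ℝ (Fin N) → ℝ} (hf : C2cl Ω f)
    {w : EuclideanSpace ℝ (Fin N) → ℝ}
    {w' : EuclideanSpace ℝ (Fin N) → (EuclideanSpace ℝ (Fin N) →L[ℝ] ℝ)}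
    (hw : ContinuousOn w (closure Ω)) (hw' : ContinuousOn w' (closure Ω))
    (hww : ∀ x ∈ Ω, HasFDerivAt w (w' x) x)
    (hbd : ∀ x ∈ frontier Ω, ⟪gradient f x, gradient η x⟫ = 0) :
    ∫ x in Ω, (w x * spaceLaplacian f x +
      ∑ i, w' x (EuclideanSpace.single i 1) * fderiv ℝ f x (EuclideanSpace.single i 1)) = 0 := by
  apply le_antisymm
  · have := aux_green_nonneg h hf (w := fun x => - w x) (w' := fun x => - w' x) hw.neg hw'.neg
      (fun x hx => (hww x hx).neg) (fun x hx => by rw [hbd x hx]; simp)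
    rw [← Left.nonneg_neg_iff, ← integral_neg]
    refine this.trans_eq (integral_congr_ae (Filter.Eventually.of_forall fun x => ?_))
    simp [Finset.sum_neg_distrib]; ring
  · exact aux_green_nonneg h hf hw hw' hww (fun x hx => by rw [hbd x hx]; simp)

lemma aux_int_lap {N : ℕ} {Ω ω₀ : Set (EuclideanSpace ℝ (Fin N))}
    {η : EuclideanSpace ℝ (Fin N) → ℝ} (h : DomHyp Ω ω₀ η)
    {f : EuclideanSpace ℝ (Fin N) → ℝ} (hf : C2cl Ω f)
    (hbd : ∀ x ∈ frontier Ω, ⟪gradient f x, gradient η x⟫ = 0) :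
    ∫ x in Ω, spaceLaplacian f x = 0 := by
  have := aux_green_zero h hf (w := fun _ => 1) (w' := fun _ => 0) continuousOn_const
    continuousOn_const (fun x _ => hasFDerivAt_const _ _) hbd
  simpa using this

lemma aux_int_energy {N : ℕ} {Ω ω₀ : Set (EuclideanSpace ℝ (Fin N))}
    {η : EuclideanSpace ℝ (Fin N) → ℝ} (h : DomHyp Ω ω₀ η)
    {f : EuclideanSpace ℝ (Fin N) → ℝ} (hf : C2cl Ω f)
    (hbd : ∀ x ∈ frontier Ω, ⟪gradient f x, gradient η x⟫ = 0) :
    ∫ x in Ω, f x * spaceLaplacian f x = - ∫ x in Ω, ‖fderiv ℝ f x‖ ^ 2 := by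
  have := aux_green_zero h hf (w := f) (w' := fderiv ℝ f) hf.cont hf.c1
    (fun x hx => (hf.d1 x (subset_closure hx)).hasFDerivAt) hbd
  rw [integral_add (f := fun x => f x * spaceLaplacian f x)
    (aux_integrableOn h.b (hf.cont.mul hf.lap_cont))] at this
  · rw [eq_neg_iff_add_eq_zero, ← this]
    simp_rw [aux_norm_sq, sq]
  · refine aux_integrableOn h.b (continuousOn_finsetSum _ fun i _ => ?_)
    exact (hf.c1.clm_apply continuousOn_const).mul (hf.c1.clm_apply continuousOn_const)

set_option maxHeartbeats 1000000 in
lemma aux_int_carl {N : ℕ} {Ω ω₀ : Set (EuclideanSpace ℝ (Fin N))}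
    {η : EuclideanSpace ℝ (Fin N) → ℝ} (h : DomHyp Ω ω₀ η)
    {f : EuclideanSpace ℝ (Fin N) → ℝ} (hf : C2cl Ω f)
    (hbd : ∀ x ∈ frontier Ω, ⟪gradient f x, gradient η x⟫ = 0)
    (hpos : ∀ x ∈ closure Ω, 0 ≤ f x) {s : ℝ} (hs : 0 ≤ s) :
    ∫ x in Ω, f x * (exp (s * η x) * (s * spaceLaplacian η x + s ^ 2 * ‖fderiv ℝ η x‖ ^ 2))
      ≤ ∫ x in Ω, exp (s * η x) * spaceLaplacian f x := by
  have hηC : C2cl Ω η := C2cl.of h.C2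
  have hφ : ∀ x, HasFDerivAt (fun y => exp (s * η y)) ((exp (s * η x) * s) • fderiv ℝ η x) x := by
    intro x
    have h1 : HasFDerivAt (fun y => s * η y) (s • fderiv ℝ η x) x :=
      ((h.C2.differentiable (by norm_num)) x).hasFDerivAt.const_mul s
    have := h1.exp
    rwa [smul_smul] at this
  have hηc : Continuous η := h.C2.continuous
  have hφc : Continuous (fun y => exp (s * η y)) := by fun_prop
  have hdη : Continuous (fderiv ℝ η) := h.C2.continuous_fderiv (by norm_num)
  have hcφ' : Continuous (fun x => (exp (s * η x) * s) • fderiv ℝ η x) :=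
    (hφc.mul continuous_const).smul hdη
  have hz := aux_green_zero h hf (w := fun y => exp (s * η y))
    (w' := fun x => (exp (s * η x) * s) • fderiv ℝ η x) hφc.continuousOn
    hcφ'.continuousOn (fun x _ => hφ x) hbd
  have hc1 : ContinuousOn (fun x => f x • ((exp (s * η x) * s) • fderiv ℝ η x)) (closure Ω) :=
    hf.cont.smul hcφ'.continuousOn
  have hc2 : ContinuousOn (fun x => exp (s * η x) • fderiv ℝ f x) (closure Ω) :=
    hφc.continuousOn.smul hf.c1
  have hc3 : ContinuousOn (fun x => - (s • (f x • ((exp (s * η x) * s) • fderiv ℝ η x) +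
      exp (s * η x) • fderiv ℝ f x))) (closure Ω) :=
    ((hc1.add hc2).const_smul s).neg
  have hc4 : ContinuousOn (fun y => - (s * (f y * exp (s * η y)))) (closure Ω) :=
    (continuousOn_const.mul (hf.cont.mul hφc.continuousOn)).neg
  have hn := aux_green_nonneg h hηC (w := fun y => - (s * (f y * exp (s * η y))))
    (w' := fun x => - (s • (f x • ((exp (s * η x) * s) • fderiv ℝ η x) + exp (s * η x) • fderiv ℝ f x)))
    hc4 hc3
    (fun x hx => ((((hf.d1 x (subset_closure hx)).hasFDerivAt.mul (hφ x)).const_mul s).neg)) ?_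
  · have hPf : ∀ i, ContinuousOn (fun x => fderiv ℝ f x (EuclideanSpace.single i 1)) (closure Ω) :=
      fun i => hf.c1.clm_apply continuousOn_const
    have hPη : ∀ i, ContinuousOn (fun x => fderiv ℝ η x (EuclideanSpace.single i 1)) (closure Ω) :=
      fun i => (hdη.clm_apply continuous_const).continuousOn
    have I1 : IntegrableOn (fun x => exp (s * η x) * spaceLaplacian f x) Ω :=
      aux_integrableOn h.b (hφc.continuousOn.mul hf.lap_cont)
    have I2 : IntegrableOn (fun x => ∑ i, (exp (s * η x) * s) *
        (fderiv ℝ η x (EuclideanSpace.single i 1) * fderiv ℝ f x (EuclideanSpace.single i 1))) Ω :=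
      aux_integrableOn h.b (continuousOn_finsetSum _ fun i _ =>
        ((hφc.continuousOn.mul continuousOn_const).mul ((hPη i).mul (hPf i))))
    have I3 : IntegrableOn (fun x => f x * (exp (s * η x) * (s * spaceLaplacian η x +
        s ^ 2 * ‖fderiv ℝ η x‖ ^ 2))) Ω :=
      aux_integrableOn h.b (hf.cont.mul (hφc.continuousOn.mul ((continuousOn_const.mul hηC.lap_cont).add
        (continuousOn_const.mul (hdη.norm.pow 2).continuousOn))))
    have e1 : ∫ x in Ω, exp (s * η x) * spaceLaplacian f x + ∑ i, (exp (s * η x) * s) *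
        (fderiv ℝ η x (EuclideanSpace.single i 1) * fderiv ℝ f x (EuclideanSpace.single i 1)) = 0 := by
      rw [← hz]
      refine integral_congr_ae (Filter.Eventually.of_forall fun x => ?_)
      simp [mul_assoc]
    have e2 : 0 ≤ ∫ x in Ω, (- (f x * (exp (s * η x) * (s * spaceLaplacian η x +
        s ^ 2 * ‖fderiv ℝ η x‖ ^ 2))) - ∑ i, (exp (s * η x) * s) *
        (fderiv ℝ η x (EuclideanSpace.single i 1) * fderiv ℝ f x (EuclideanSpace.single i 1))) := by
      refine hn.trans_eq (integral_congr_ae (Filter.Eventually.of_forall fun x => ?_))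
      simp only [aux_norm_sq, _root_.neg_apply, _root_.smul_apply,
        _root_.add_apply, smul_eq_mul]
      have : ∀ i : Fin N, -(s * (f x * (exp (s * η x) * s * fderiv ℝ η x (EuclideanSpace.single i 1)) +
          exp (s * η x) * fderiv ℝ f x (EuclideanSpace.single i 1))) *
          fderiv ℝ η x (EuclideanSpace.single i 1) =
          - (s ^ 2 * f x * exp (s * η x)) * (fderiv ℝ η x (EuclideanSpace.single i 1)) ^ 2
          - (exp (s * η x) * s) * (fderiv ℝ η x (EuclideanSpace.single i 1) *
            fderiv ℝ f x (EuclideanSpace.single i 1)) := fun i => by ring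
      simp_rw [this, Finset.sum_sub_distrib, ← Finset.mul_sum]
      ring
    rw [integral_add I1 I2] at e1
    have I4 : IntegrableOn (fun x => - (f x * (exp (s * η x) * (s * spaceLaplacian η x +
        s ^ 2 * ‖fderiv ℝ η x‖ ^ 2)))) Ω := I3.neg
    rw [integral_sub I4 I2, integral_neg] at e2
    linarith
  · intro x hx
    rw [real_inner_self_eq_norm_sq]
    have := hpos x (frontier_subset_closure hx)
    have := exp_pos (s * η x)
    have h3 : 0 ≤ (s * (f x * exp (s * η x))) * ‖gradient η x‖ ^ 2 := by positivity
    simpa using h3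

lemma aux_scale {E : Type*} [NormedAddCommGroup E] [InnerProductSpace ℝ E] [FiniteDimensional ℝ E]
    [MeasurableSpace E] [BorelSpace E] {F : E → ENNReal} (hF : Measurable F) (p : E) {r : ℝ}
    (hr : 0 < r) :
    ∫⁻ z, F (p + r • z) = ENNReal.ofReal ((r ^ Module.finrank ℝ E)⁻¹) * ∫⁻ y, F y := by
  have h1 : ∫⁻ y, F (p + y) = ∫⁻ y, F y := lintegral_add_left_eq_self F p
  have h2 : Measurable (fun y => F (p + y)) := hF.comp (measurable_const_add p)
  have h3 := lintegral_map (μ := (volume : Measure E)) h2 (measurable_const_smul r)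
  rw [Measure.map_addHaar_smul _ hr.ne', lintegral_smul_measure, h1] at h3
  rw [← h3, abs_of_pos (by positivity), smul_eq_mul]

lemma aux_line {E : Type*} [NormedAddCommGroup E] [InnerProductSpace ℝ E]
    {Ω : Set E} {u : E → ℝ} (hu : ∀ x ∈ Ω, DifferentiableAt ℝ u x)
    (huc : ContinuousOn (fderiv ℝ u) Ω) {x b : E} {δ B : ℝ} (hδ : 0 < δ)
    (hseg : ∀ t ∈ Icc 0 δ, x + t • b ∈ Ω) (hb : ‖b‖ ≤ B) :
    ContinuousOn (fun t : ℝ => ‖fderiv ℝ u (x + t • b)‖ ^ 2) (Icc 0 δ) ∧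
    u x ^ 2 ≤ 2 * u x * u (x + δ • b) +
      δ * B ^ 2 * ∫ t in (0:ℝ)..δ, ‖fderiv ℝ u (x + t • b)‖ ^ 2 := by
  have hc0 : Continuous (fun t : ℝ => x + t • b) := by fun_prop
  have hc1 : ContinuousOn (fun t : ℝ => fderiv ℝ u (x + t • b)) (Icc 0 δ) :=
    huc.comp hc0.continuousOn hseg
  have hc2 : ContinuousOn (fun t : ℝ => ‖fderiv ℝ u (x + t • b)‖ ^ 2) (Icc 0 δ) := hc1.norm.pow 2
  have hc3 : ContinuousOn (fun t : ℝ => fderiv ℝ u (x + t • b) b) (Icc 0 δ) :=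
    hc1.clm_apply continuousOn_const
  refine ⟨hc2, ?_⟩
  have hI : uIcc 0 δ = Icc 0 δ := uIcc_of_le hδ.le
  have hd : ∀ t ∈ uIcc 0 δ, HasDerivAt (fun t : ℝ => u (x + t • b)) (fderiv ℝ u (x + t • b) b) t := by
    intro t ht
    rw [hI] at ht
    have h1 : HasDerivAt (fun t : ℝ => x + t • b) b t := by
      simpa using ((hasDerivAt_id t).smul_const b).const_add x
    exact (hu _ (hseg t ht)).hasFDerivAt.comp_hasDerivAt t h1
  have i3 : IntervalIntegrable (fun t : ℝ => fderiv ℝ u (x + t • b) b) volume 0 δ := by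
    apply ContinuousOn.intervalIntegrable; rwa [hI]
  have i2 : IntervalIntegrable (fun t : ℝ => ‖fderiv ℝ u (x + t • b)‖ ^ 2) volume 0 δ := by
    apply ContinuousOn.intervalIntegrable; rwa [hI]
  have hF := intervalIntegral.integral_eq_sub_of_hasDerivAt hd i3
  simp only [zero_smul, add_zero] at hF
  have hmono : ∫ t in (0:ℝ)..δ, (- u x) * fderiv ℝ u (x + t • b) b ≤
      ∫ t in (0:ℝ)..δ, (u x ^ 2 / (2 * δ) + (δ * B ^ 2 / 2) * ‖fderiv ℝ u (x + t • b)‖ ^ 2) := by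
    refine intervalIntegral.integral_mono_on hδ.le (i3.const_mul _)
      (intervalIntegrable_const.add (i2.const_mul _)) fun t ht => ?_
    have h1 : |fderiv ℝ u (x + t • b) b| ≤ ‖fderiv ℝ u (x + t • b)‖ * B :=
      ((fderiv ℝ u (x + t • b)).le_opNorm b).trans (mul_le_mul_of_nonneg_left hb (norm_nonneg _))
    set k := fderiv ℝ u (x + t • b) b
    set n := ‖fderiv ℝ u (x + t • b)‖
    have h2 : k ^ 2 ≤ n ^ 2 * B ^ 2 := by
      rw [← mul_pow, ← sq_abs k]; exact pow_le_pow_left₀ (abs_nonneg _) h1 2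
    have h3 : u x ^ 2 / (2 * δ) + δ * k ^ 2 / 2 - (- u x) * k = (u x + δ * k) ^ 2 / (2 * δ) := by
      field_simp; ring
    have h4 : 0 ≤ (u x + δ * k) ^ 2 / (2 * δ) := by positivity
    have h5 : δ * k ^ 2 ≤ δ * (n ^ 2 * B ^ 2) := mul_le_mul_of_nonneg_left h2 hδ.le
    nlinarith
  rw [intervalIntegral.integral_const_mul, hF, intervalIntegral.integral_add
    intervalIntegrable_const (i2.const_mul _), intervalIntegral.integral_const_mul,
    intervalIntegral.integral_const] at hmono
  simp only [sub_zero, smul_eq_mul] at hmono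
  have h6 : δ * (u x ^ 2 / (2 * δ)) = u x ^ 2 / 2 := by field_simp
  rw [h6] at hmono
  nlinarith

lemma aux_nash_inner {E : Type*} [NormedAddCommGroup E] [InnerProductSpace ℝ E]
    [FiniteDimensional ℝ E] [MeasurableSpace E] [BorelSpace E]
    {Ω : Set E} (hΩ : MeasurableSet Ω) {g : E → E} (hg : Continuous g) {t c : ℝ}
    (ht : 0 < t) (hc : 0 < c) (hL : ∀ x ∈ Ω, ∀ y ∈ Ω, t * ‖g x - g y‖ ≤ ‖x - y‖ / 2)
    {F : E → ENNReal} (hF : Measurable F) :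
    ∫⁻ x in Ω, ∫⁻ z in Metric.ball (0:E) c, F (x + t • (g x + z)) ≤
      (ENNReal.ofReal ((4 * c) ^ Module.finrank ℝ E) * volume (Metric.ball (0:E) 1)) * ∫⁻ y, F y := by
  set d := Module.finrank ℝ E
  have step1 : ∀ x, ∫⁻ z in Metric.ball (0:E) c, F (x + t • (g x + z)) =
      ENNReal.ofReal ((t ^ d)⁻¹) * ∫⁻ y, (Metric.ball (x + t • g x) (t * c)).indicator F y := by
    intro x
    rw [← aux_scale (hF.indicator Metric.isOpen_ball.measurableSet) (x + t • g x) ht,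
      ← lintegral_indicator Metric.isOpen_ball.measurableSet]
    refine lintegral_congr fun z => ?_
    have hiff : z ∈ Metric.ball (0:E) c ↔ x + t • g x + t • z ∈ Metric.ball (x + t • g x) (t * c) := by
      rw [mem_ball_zero_iff, mem_ball_iff_norm, add_sub_cancel_left, norm_smul, norm_eq_abs,
        abs_of_pos ht, mul_lt_mul_iff_right₀ ht]
    by_cases hz : z ∈ Metric.ball (0:E) c
    · rw [indicator_of_mem hz, indicator_of_mem (hiff.1 hz), smul_add, add_assoc]
    · rw [indicator_of_notMem hz, indicator_of_notMem (fun h => hz (hiff.2 h))]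
  simp_rw [step1]
  have hmeas : Measurable (fun p : E × E =>
      (Metric.ball (p.1 + t • g p.1) (t * c)).indicator F p.2) := by
    have hS : MeasurableSet {p : E × E | dist p.2 (p.1 + t • g p.1) < t * c} := by
      apply IsOpen.measurableSet
      apply isOpen_lt <;> fun_prop
    exact (hF.comp measurable_snd).indicator hS
  rw [lintegral_const_mul' _ _ ENNReal.ofReal_ne_top, lintegral_lintegral_swap hmeas.aemeasurable]
  have step2 : ∀ y, ∫⁻ x in Ω, (Metric.ball (x + t • g x) (t * c)).indicator F y ≤
      F y * (ENNReal.ofReal ((4 * (t * c)) ^ d) * volume (Metric.ball (0:E) 1)) := by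
    intro y
    set S : Set E := {x | y ∈ Metric.ball (x + t • g x) (t * c)} with hS
    have hSm : MeasurableSet S := by
      apply IsOpen.measurableSet
      show IsOpen {x | dist y (x + t • g x) < t * c}
      apply isOpen_lt <;> fun_prop
    have e : ∀ x, (Metric.ball (x + t • g x) (t * c)).indicator F y = S.indicator (fun _ => F y) x := by
      intro x
      by_cases hx : y ∈ Metric.ball (x + t • g x) (t * c)
      · rw [indicator_of_mem hx, indicator_of_mem (show x ∈ S from hx)]
      · rw [indicator_of_notMem hx, indicator_of_notMem (show x ∉ S from hx)]
    simp_rw [e]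
    rw [lintegral_indicator_const hSm, Measure.restrict_apply hSm]
    gcongr
    rcases (S ∩ Ω).eq_empty_or_nonempty with h0 | ⟨x0, hx0, hx0Ω⟩
    · simp [h0]
    · have hsub : S ∩ Ω ⊆ Metric.closedBall x0 (4 * (t * c)) := by
        rintro x ⟨hx, hxΩ⟩
        have h1 : ‖y - (x + t • g x)‖ < t * c := by
          have hx' : y ∈ Metric.ball (x + t • g x) (t * c) := hx
          rwa [mem_ball_iff_norm] at hx'
        have h2 : ‖y - (x0 + t • g x0)‖ < t * c := by
          have hx' : y ∈ Metric.ball (x0 + t • g x0) (t * c) := hx0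
          rwa [mem_ball_iff_norm] at hx'
        have h3 := hL x hxΩ x0 hx0Ω
        rw [mem_closedBall_iff_norm]
        have h4 : x - x0 = (y - (x0 + t • g x0)) - (y - (x + t • g x)) - t • (g x - g x0) := by
          rw [smul_sub]; abel
        have h5 : ‖x - x0‖ ≤ ‖y - (x0 + t • g x0)‖ + ‖y - (x + t • g x)‖ + ‖t • (g x - g x0)‖ := by
          conv_lhs => rw [h4]
          exact (norm_sub_le _ _).trans (add_le_add_left (norm_sub_le _ _) _)
        rw [norm_smul, norm_eq_abs, abs_of_pos ht] at h5
        linarith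
      refine (measure_mono hsub).trans_eq ?_
      rw [Measure.addHaar_closedBall _ _ (by positivity)]
  calc ENNReal.ofReal ((t ^ d)⁻¹) * ∫⁻ y, ∫⁻ x in Ω, (Metric.ball (x + t • g x) (t * c)).indicator F y
      ≤ ENNReal.ofReal ((t ^ d)⁻¹) * ∫⁻ y, F y *
        (ENNReal.ofReal ((4 * (t * c)) ^ d) * volume (Metric.ball (0:E) 1)) := by
        gcongr with y; exact step2 y
    _ = _ := by
        rw [lintegral_mul_const _ hF]
        have : (4 * c) ^ d = (t ^ d)⁻¹ * (4 * (t * c)) ^ d := by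
          rw [show 4 * (t * c) = t * (4 * c) by ring, mul_pow t]
          field_simp
        rw [this, ENNReal.ofReal_mul (by positivity)]
        ring

lemma aux_nash_core {E : Type*} [NormedAddCommGroup E] [InnerProductSpace ℝ E]
    [FiniteDimensional ℝ E] [MeasurableSpace E] [BorelSpace E]
    {Ω : Set E} (hΩ : IsOpen Ω) {g : E → E} (hg : Continuous g) {δ c B : ℝ}
    (hδ : 0 < δ) (hc : 0 < c)
    (h1 : ∀ x ∈ Ω, ∀ z : E, ‖z‖ < c → ∀ t ∈ Icc 0 δ, x + t • (g x + z) ∈ Ω)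
    (h2 : ∀ x ∈ Ω, ∀ z : E, ‖z‖ < c → ‖g x + z‖ ≤ B)
    (hL : ∀ x ∈ Ω, ∀ y ∈ Ω, δ * ‖g x - g y‖ ≤ ‖x - y‖ / 2)
    {u : E → ℝ} (hu : ∀ x ∈ Ω, DifferentiableAt ℝ u x)
    (huc : ContinuousOn (fderiv ℝ u) Ω) (hpos : ∀ x ∈ Ω, 0 ≤ u x) :
    volume (Metric.ball (0:E) c) * ∫⁻ x in Ω, ENNReal.ofReal (u x ^ 2) ≤
      2 * ENNReal.ofReal ((δ ^ Module.finrank ℝ E)⁻¹) * (∫⁻ x in Ω, ENNReal.ofReal (u x)) ^ 2 +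
      ENNReal.ofReal (δ ^ 2 * B ^ 2) *
        ((ENNReal.ofReal ((4 * c) ^ Module.finrank ℝ E) * volume (Metric.ball (0:E) 1)) *
        ∫⁻ x in Ω, ENNReal.ofReal (‖fderiv ℝ u x‖ ^ 2)) := by
  classical
  have hm := hΩ.measurableSet
  have hucont : ContinuousOn u Ω := fun x hx => (hu x hx).continuousAt.continuousWithinAt
  set U : E → ENNReal := Ω.indicator (fun y => ENNReal.ofReal (u y)) with hU
  set W : E → ENNReal := Ω.indicator (fun y => ENNReal.ofReal (‖fderiv ℝ u y‖ ^ 2)) with hW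
  have hUm : Measurable U := by
    have hc : ContinuousOn (fun y => ENNReal.ofReal (u y)) Ω :=
      ENNReal.continuous_ofReal.comp_continuousOn hucont
    rw [hU, ← piecewise_eq_indicator]
    exact hc.measurable_piecewise continuousOn_const hm
  have hWm : Measurable W := by
    have hc : ContinuousOn (fun y => ENNReal.ofReal (‖fderiv ℝ u y‖ ^ 2)) Ω :=
      ENNReal.continuous_ofReal.comp_continuousOn (huc.norm.pow 2)
    rw [hW, ← piecewise_eq_indicator]
    exact hc.measurable_piecewise continuousOn_const hm
  have hIU : ∫⁻ x, U x = ∫⁻ x in Ω, ENNReal.ofReal (u x) := lintegral_indicator hm _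
  have hIW : ∫⁻ x, W x = ∫⁻ x in Ω, ENNReal.ofReal (‖fderiv ℝ u x‖ ^ 2) := lintegral_indicator hm _
  rw [← hIU, ← hIW]
  have hpt : ∀ x ∈ Ω, ∀ z ∈ Metric.ball (0:E) c, ENNReal.ofReal (u x ^ 2) ≤
      2 * U x * U (x + δ • (g x + z)) + ENNReal.ofReal (δ * B ^ 2) *
        ∫⁻ t in Ioc 0 δ, W (x + t • (g x + z)) := by
    intro x hx z hz
    rw [mem_ball_zero_iff] at hz
    obtain ⟨k1, k2⟩ := aux_line hu huc hδ (h1 x hx z hz) (h2 x hx z hz)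
    have hxδ := h1 x hx z hz δ ⟨hδ.le, le_rfl⟩
    have e1 : ∫⁻ t in Ioc 0 δ, W (x + t • (g x + z)) =
        ENNReal.ofReal (∫ t in (0:ℝ)..δ, ‖fderiv ℝ u (x + t • (g x + z))‖ ^ 2) := by
      rw [intervalIntegral.integral_of_le hδ.le, ofReal_integral_eq_lintegral_ofReal]
      · refine setLIntegral_congr_fun measurableSet_Ioc fun t ht => ?_
        simp only [hW]
        rw [indicator_of_mem (h1 x hx z hz t ⟨ht.1.le, ht.2⟩)]
      · exact (k1.integrableOn_Icc).mono_set Ioc_subset_Icc_self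
      · exact Filter.Eventually.of_forall fun t => by positivity
    have p1 := hpos x hx
    have p2 := hpos _ hxδ
    rw [e1, hU, indicator_of_mem hx, indicator_of_mem hxδ, ← ENNReal.ofReal_mul (by positivity),
      show (2 : ENNReal) = ENNReal.ofReal 2 by simp, ← ENNReal.ofReal_mul (by positivity),
      ← ENNReal.ofReal_mul (by positivity), ← ENNReal.ofReal_add (by positivity)]
    · exact ENNReal.ofReal_le_ofReal k2
    · exact mul_nonneg (by positivity) (intervalIntegral.integral_nonneg hδ.le fun t _ => by positivity)
  have hgm : Measurable g := hg.measurable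
  have hmW3 : Measurable (fun p : E × E × ℝ => W (p.1 + p.2.2 • (g p.1 + p.2.1))) := by
    apply hWm.comp
    apply Continuous.measurable; fun_prop
  have hb0 : MeasurableSet (Metric.ball (0:E) c) := Metric.isOpen_ball.measurableSet
  calc volume (Metric.ball (0:E) c) * ∫⁻ x in Ω, ENNReal.ofReal (u x ^ 2)
      = ∫⁻ x in Ω, ∫⁻ z in Metric.ball (0:E) c, ENNReal.ofReal (u x ^ 2) := by
        simp_rw [setLIntegral_const]
        rw [lintegral_mul_const', mul_comm]
        exact measure_ball_lt_top.ne
    _ ≤ ∫⁻ x in Ω, ∫⁻ z in Metric.ball (0:E) c, (2 * U x * U (x + δ • (g x + z)) +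
          ENNReal.ofReal (δ * B ^ 2) * ∫⁻ t in Ioc 0 δ, W (x + t • (g x + z))) := by
        refine setLIntegral_mono' hm fun x hx => setLIntegral_mono' hb0 fun z hz => hpt x hx z hz
    _ = ∫⁻ x in Ω, ((2 * U x * ∫⁻ z in Metric.ball (0:E) c, U (x + δ • (g x + z))) +
          ENNReal.ofReal (δ * B ^ 2) * ∫⁻ z in Metric.ball (0:E) c,
            ∫⁻ t in Ioc 0 δ, W (x + t • (g x + z))) := by
        refine lintegral_congr fun x => ?_
        have hmU : Measurable (fun z => U (x + δ • (g x + z))) := hUm.comp (by fun_prop)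
        rw [lintegral_add_left (hmU.const_mul _), lintegral_const_mul _ hmU,
          lintegral_const_mul' _ _ ENNReal.ofReal_ne_top]
    _ = (∫⁻ x in Ω, (2 * U x * ∫⁻ z in Metric.ball (0:E) c, U (x + δ • (g x + z)))) +
          ENNReal.ofReal (δ * B ^ 2) * ∫⁻ x in Ω, ∫⁻ z in Metric.ball (0:E) c,
            ∫⁻ t in Ioc 0 δ, W (x + t • (g x + z)) := by
        have hmU : Measurable (fun p : E × E => U (p.1 + δ • (g p.1 + p.2))) := hUm.comp (by fun_prop)
        rw [lintegral_add_left, lintegral_const_mul' _ _ ENNReal.ofReal_ne_top]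
        exact (hUm.const_mul 2).mul (hmU.lintegral_prod_right')
    _ ≤ _ := by
        gcongr ?_ + ?_
        · calc ∫⁻ x in Ω, (2 * U x * ∫⁻ z in Metric.ball (0:E) c, U (x + δ • (g x + z)))
              ≤ ∫⁻ x in Ω, U x * (2 * (ENNReal.ofReal ((δ ^ Module.finrank ℝ E)⁻¹) * ∫⁻ y, U y)) := by
                refine lintegral_mono fun x => ?_
                simp only
                rw [mul_comm 2 (U x), mul_assoc, ← aux_scale hUm (x + δ • g x) hδ]
                have hz : ∫⁻ z in Metric.ball (0:E) c, U (x + δ • (g x + z)) ≤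
                    ∫⁻ z, U (x + δ • g x + δ • z) := by
                  refine (setLIntegral_le_lintegral _ _).trans_eq (lintegral_congr fun z => ?_)
                  rw [smul_add, add_assoc]
                exact mul_le_mul_right (mul_le_mul_right hz _) _
            _ ≤ (∫⁻ x, U x) * (2 * (ENNReal.ofReal ((δ ^ Module.finrank ℝ E)⁻¹) * ∫⁻ y, U y)) := by
                rw [lintegral_mul_const _ hUm]
                gcongr
                exact Measure.restrict_le_self
            _ = _ := by ring
        · have e1 : ∫⁻ x in Ω, ∫⁻ z in Metric.ball (0:E) c, ∫⁻ t in Ioc 0 δ, W (x + t • (g x + z))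
              = ∫⁻ t in Ioc 0 δ, ∫⁻ x in Ω, ∫⁻ z in Metric.ball (0:E) c, W (x + t • (g x + z)) := by
            have hin : ∀ x, ∫⁻ z in Metric.ball (0:E) c, ∫⁻ t in Ioc 0 δ, W (x + t • (g x + z))
                = ∫⁻ t in Ioc 0 δ, ∫⁻ z in Metric.ball (0:E) c, W (x + t • (g x + z)) := by
              intro x
              apply lintegral_lintegral_swap
              exact (hmW3.comp (measurable_const.prodMk measurable_id)).aemeasurable
            simp_rw [hin]
            apply lintegral_lintegral_swap
            have : Measurable (fun p : (E × ℝ) × E => W (p.1.1 + p.1.2 • (g p.1.1 + p.2))) :=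
              hWm.comp (by fun_prop)
            exact (this.lintegral_prod_right').aemeasurable
          rw [e1]
          calc ENNReal.ofReal (δ * B ^ 2) *
                ∫⁻ t in Ioc 0 δ, ∫⁻ x in Ω, ∫⁻ z in Metric.ball (0:E) c, W (x + t • (g x + z))
              ≤ ENNReal.ofReal (δ * B ^ 2) * ∫⁻ t in Ioc 0 δ, ((ENNReal.ofReal
                ((4 * c) ^ Module.finrank ℝ E) * volume (Metric.ball (0:E) 1)) * ∫⁻ y, W y) := by
                gcongr ENNReal.ofReal (δ * B ^ 2) * ?_
                refine setLIntegral_mono' measurableSet_Ioc fun t ht => ?_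
                refine aux_nash_inner hm hg ht.1 hc (fun x hx y hy => ?_) hWm
                exact (mul_le_mul_of_nonneg_right ht.2 (norm_nonneg _)).trans (hL x hx y hy)
            _ = _ := by
                rw [setLIntegral_const, Real.volume_Ioc, sub_zero,
                  show δ ^ 2 * B ^ 2 = (δ * B ^ 2) * δ by ring, ENNReal.ofReal_mul (p := δ * B ^ 2) (q := δ) (by positivity)]
                ring

lemma aux_geom {N : ℕ} {Ω ω₀ : Set (EuclideanSpace ℝ (Fin N))}
    {η : EuclideanSpace ℝ (Fin N) → ℝ} (h : DomHyp Ω ω₀ η) :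
    ∃ δ > (0:ℝ), ∃ c > (0:ℝ), ∃ B > (0:ℝ),
      (∀ x ∈ Ω, ∀ z : EuclideanSpace ℝ (Fin N), ‖z‖ < c → ∀ t ∈ Icc 0 δ,
        x + t • (gradient η x + z) ∈ Ω) ∧
      (∀ x ∈ Ω, ∀ z : EuclideanSpace ℝ (Fin N), ‖z‖ < c → ‖gradient η x + z‖ ≤ B) ∧
      (∀ x ∈ Ω, ∀ y ∈ Ω, δ * ‖gradient η x - gradient η y‖ ≤ ‖x - y‖ / 2) := by
  have hd1 : Differentiable ℝ η := h.C2.differentiable (by norm_num)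
  have hcd : ContDiff ℝ 1 (fderiv ℝ η) := h.C2.fderiv_right (by norm_num)
  have hd2 : Differentiable ℝ (fderiv ℝ η) := hcd.differentiable (by norm_num)
  have hc1 : Continuous (fderiv ℝ η) := hd2.continuous
  have hc2 : Continuous (fderiv ℝ (fderiv ℝ η)) := hcd.continuous_fderiv (by norm_num)
  -- lower bound
  obtain ⟨γ, hγ, hγb⟩ : ∃ γ > (0:ℝ), ∀ x ∈ Ω \ ω₀, γ ≤ ‖fderiv ℝ η x‖ := by
    have hK : IsCompact (closure (Ω \ ω₀)) :=
      (h.b.subset sdiff_subset).isCompact_closure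
    rcases (closure (Ω \ ω₀)).eq_empty_or_nonempty with h0 | hne
    · refine ⟨1, one_pos, fun x hx => ?_⟩
      have := subset_closure hx
      rw [h0] at this; exact this.elim
    · obtain ⟨x0, hx0, hmin⟩ := hK.exists_isMinOn hne hc1.norm.continuousOn
      refine ⟨‖fderiv ℝ η x0‖, ?_, fun x hx => hmin (subset_closure hx)⟩
      rw [← aux_norm_grad]; exact h.gr x0 hx0
  obtain ⟨R, hR⟩ := h.b.subset_closedBall (0 : EuclideanSpace ℝ (Fin N))
  set K := Metric.closedBall (0 : EuclideanSpace ℝ (Fin N)) (R + 1) with hKdef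
  have hK : IsCompact K := isCompact_closedBall _ _
  have hKc : Convex ℝ K := convex_closedBall _ _
  have hΩK : Ω ⊆ K := hR.trans (Metric.closedBall_subset_closedBall (by linarith))
  obtain ⟨G0, hG0⟩ := hK.exists_bound_of_continuousOn hc1.continuousOn
  obtain ⟨L0, hL0⟩ := hK.exists_bound_of_continuousOn (f := fderiv ℝ (fderiv ℝ η)) hc2.continuousOn
  set G := max G0 1
  set L := max L0 1
  have hG : ∀ x ∈ K, ‖fderiv ℝ η x‖ ≤ G := fun x hx => (hG0 x hx).trans (le_max_left _ _)
  have hL : ∀ x ∈ K, ‖fderiv ℝ (fderiv ℝ η) x‖ ≤ L := fun x hx => (hL0 x hx).trans (le_max_left _ _)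
  have hG1 : 1 ≤ G := le_max_right _ _
  have hL1 : 1 ≤ L := le_max_right _ _
  have hLip : ∀ x ∈ K, ∀ y ∈ K, ‖fderiv ℝ η y - fderiv ℝ η x‖ ≤ L * ‖y - x‖ := fun x hx y hy =>
    hKc.norm_image_sub_le_of_norm_fderiv_le (fun z _ => hd2 z) hL hx hy
  have hTay : ∀ x ∈ K, ∀ y ∈ K, ‖η y - η x - fderiv ℝ η x (y - x)‖ ≤ L * ‖y - x‖ * ‖y - x‖ := by
    intro x hx y hy
    have hS : Convex ℝ (K ∩ Metric.closedBall x ‖y - x‖) := hKc.inter (convex_closedBall _ _)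
    refine hS.norm_image_sub_le_of_norm_fderiv_le' (fun z _ => hd1 z) (fun z hz => ?_)
      ⟨hx, by simp⟩ ⟨hy, by simp [dist_eq_norm]⟩
    refine (hLip x hx z hz.1).trans ?_
    have : ‖z - x‖ ≤ ‖y - x‖ := by simpa [dist_eq_norm] using hz.2
    gcongr
  set B := G + γ / 2 with hB
  have hBpos : 0 < B := by positivity
  have hKω : IsCompact (closure ω₀) := (h.b.subset (subset_closure.trans h.sub)).isCompact_closure
  obtain ⟨d, hd, hdsub⟩ := hKω.exists_thickening_subset_open h.o h.sub
  have hbb : ∀ x ∈ Ω, ∀ z : EuclideanSpace ℝ (Fin N), ‖z‖ < γ / 2 → ‖gradient η x + z‖ ≤ B := by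
    intro x hx z hz
    have := hG x (hΩK hx)
    rw [← aux_norm_grad] at this
    exact (norm_add_le _ _).trans (add_le_add this hz.le)
  set δ := min (min (1 / B) (γ ^ 2 / (2 * L * B ^ 2))) (min (d / (2 * B)) (1 / (2 * L))) with hδ
  have hδpos : 0 < δ := by positivity
  have e1 : δ * B ≤ 1 := by
    have : δ ≤ 1 / B := (min_le_left _ _).trans (min_le_left _ _)
    rwa [le_div_iff₀ hBpos] at this
  have e2 : δ * (2 * L * B ^ 2) ≤ γ ^ 2 := by
    have : δ ≤ γ ^ 2 / (2 * L * B ^ 2) := (min_le_left _ _).trans (min_le_right _ _)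
    rwa [le_div_iff₀ (by positivity)] at this
  have e3 : δ * (2 * B) ≤ d := by
    have : δ ≤ d / (2 * B) := (min_le_right _ _).trans (min_le_left _ _)
    rwa [le_div_iff₀ (by positivity)] at this
  have e4 : δ * (2 * L) ≤ 1 := by
    have : δ ≤ 1 / (2 * L) := (min_le_right _ _).trans (min_le_right _ _)
    rwa [le_div_iff₀ (by positivity)] at this
  refine ⟨δ, hδpos, γ / 2, by positivity, B, hBpos, ?_, hbb, ?_⟩
  · intro x hx z hz t ht
    set b := gradient η x + z with hb
    have hbB : ‖b‖ ≤ B := hbb x hx z hz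
    have hnorm : ∀ s ∈ Icc 0 δ, ‖s • b‖ ≤ s * B := fun s hs => by
      rw [norm_smul, norm_eq_abs, abs_of_nonneg hs.1]; exact mul_le_mul_of_nonneg_left hbB hs.1
    by_cases hxω : x ∈ ω₀
    · apply hdsub
      rw [Metric.mem_thickening_iff]
      refine ⟨x, subset_closure hxω, ?_⟩
      rw [dist_eq_norm, add_sub_cancel_left]
      have := hnorm t ht
      have h6 : t * B ≤ δ * B := mul_le_mul_of_nonneg_right ht.2 hBpos.le
      linarith
    · have hmem : ∀ s ∈ Icc 0 δ, 0 < η (x + s • b) := by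
        intro s hs
        have hn := hnorm s hs
        have hs1 : s * B ≤ 1 := (mul_le_mul_of_nonneg_right hs.2 hBpos.le).trans e1
        have hyK : x + s • b ∈ K := by
          rw [hKdef, mem_closedBall_zero_iff]
          have := hR hx
          rw [mem_closedBall_zero_iff] at this
          exact (norm_add_le _ _).trans (by linarith)
        have hT := hTay x (hΩK hx) _ hyK
        rw [add_sub_cancel_left, map_smul, smul_eq_mul] at hT
        have hlow : γ ^ 2 / 2 ≤ fderiv ℝ η x b := by
          have g1 := hγb x ⟨hx, hxω⟩
          rw [← aux_norm_grad] at g1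
          rw [show fderiv ℝ η x b = ⟪gradient η x, b⟫ by simp [gradient], hb, inner_add_right, real_inner_self_eq_norm_sq]
          have g2 := abs_real_inner_le_norm (gradient η x) z
          have g3 := neg_abs_le (⟪gradient η x, z⟫)
          have g4 : ‖gradient η x‖ * ‖z‖ ≤ ‖gradient η x‖ * (γ / 2) :=
            mul_le_mul_of_nonneg_left hz.le (norm_nonneg _)
          nlinarith
        have hη0 := h.pos x hx
        have hle := (abs_le.1 (norm_eq_abs _ ▸ hT)).1
        have q1 : L * ‖s • b‖ * ‖s • b‖ ≤ L * (s * B) * (s * B) := by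
          have hs0 := hs.1
          gcongr
        have q2 : s * (2 * L * B ^ 2) ≤ δ * (2 * L * B ^ 2) := by
          apply mul_le_mul_of_nonneg_right hs.2; positivity
        have q3 : s * (s * (2 * L * B ^ 2)) ≤ s * γ ^ 2 := mul_le_mul_of_nonneg_left (q2.trans e2) hs.1
        have q4 : s * (γ ^ 2 / 2) ≤ s * fderiv ℝ η x b := mul_le_mul_of_nonneg_left hlow hs.1
        nlinarith
      have hpre : IsPreconnected ((fun s : ℝ => x + s • b) '' Icc 0 δ) :=
        isPreconnected_Icc.image _ (by fun_prop)
      have hsub := hpre.subset_of_closure_inter_subset h.o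
        ⟨x, ⟨0, ⟨le_rfl, hδpos.le⟩, by simp⟩, hx⟩ (by
          rintro y ⟨hy, s, hs, rfl⟩
          by_contra hcon
          have : x + s • b ∈ frontier Ω := by
            rw [h.o.frontier_eq]; exact ⟨hy, hcon⟩
          exact (hmem s hs).ne' (h.bd _ this))
      exact hsub ⟨t, ht, rfl⟩
  · intro x hx y hy
    have := hLip y (hΩK hy) x (hΩK hx)
    have e : ‖gradient η x - gradient η y‖ = ‖fderiv ℝ η x - fderiv ℝ η y‖ := by
      simp only [gradient]
      rw [← map_sub, LinearIsometryEquiv.norm_map]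
    rw [e]
    calc δ * ‖fderiv ℝ η x - fderiv ℝ η y‖ ≤ δ * (L * ‖x - y‖) := by gcongr
      _ = δ * (2 * L) * (‖x - y‖ / 2) := by ring
      _ ≤ 1 * (‖x - y‖ / 2) := by gcongr
      _ = _ := one_mul _

lemma aux_nash {N : ℕ} {Ω ω₀ : Set (EuclideanSpace ℝ (Fin N))}
    {η : EuclideanSpace ℝ (Fin N) → ℝ} (h : DomHyp Ω ω₀ η) :
    ∃ δ₀ > (0:ℝ), ∃ C1 > (0:ℝ), ∃ C2 > (0:ℝ), ∀ δ, 0 < δ → δ ≤ δ₀ →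
      ∀ u : EuclideanSpace ℝ (Fin N) → ℝ, (∀ x ∈ closure Ω, DifferentiableAt ℝ u x) →
      ContinuousOn (fderiv ℝ u) (closure Ω) → (∀ x ∈ closure Ω, 0 ≤ u x) →
      ∫ x in Ω, u x ^ 2 ≤ C1 * δ ^ 2 * (∫ x in Ω, ‖fderiv ℝ u x‖ ^ 2) +
        C2 * (δ ^ N)⁻¹ * (∫ x in Ω, u x) ^ 2 := by
  obtain ⟨δ₀, hδ₀, c, hc, B, hB, h1, h2, h3⟩ := aux_geom h
  set V := (volume (Metric.ball (0 : EuclideanSpace ℝ (Fin N)) c)).toReal with hV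
  set V1 := (volume (Metric.ball (0 : EuclideanSpace ℝ (Fin N)) 1)).toReal with hV1
  have hVpos : 0 < V := ENNReal.toReal_pos (Metric.measure_ball_pos _ _ hc).ne' measure_ball_lt_top.ne
  have hV1pos : 0 < V1 :=
    ENNReal.toReal_pos (Metric.measure_ball_pos _ _ one_pos).ne' measure_ball_lt_top.ne
  refine ⟨δ₀, hδ₀, B ^ 2 * ((4 * c) ^ N * V1) / V, by positivity, 2 / V, by positivity, ?_⟩
  intro δ hδ hδle u hu huc hpos
  have hg : Continuous (gradient η) := by
    have : Continuous (fderiv ℝ η) := h.C2.continuous_fderiv (by norm_num)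
    exact (LinearIsometryEquiv.continuous _).comp this
  have key := aux_nash_core (B := B) h.o hg hδ hc
    (fun x hx z hz t ht => h1 x hx z hz t ⟨ht.1, ht.2.trans hδle⟩) h2
    (fun x hx y hy => (mul_le_mul_of_nonneg_right hδle (norm_nonneg _)).trans (h3 x hx y hy))
    (fun x hx => hu x (subset_closure hx)) (huc.mono subset_closure)
    (fun x hx => hpos x (subset_closure hx))
  have hucont : ContinuousOn u (closure Ω) := fun x hx => (hu x hx).continuousAt.continuousWithinAt
  have i1 : IntegrableOn u Ω := aux_integrableOn h.b hucont
  have i2 : IntegrableOn (fun x => u x ^ 2) Ω := aux_integrableOn h.b (hucont.pow 2)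
  have i3 : IntegrableOn (fun x => ‖fderiv ℝ u x‖ ^ 2) Ω := aux_integrableOn h.b (huc.norm.pow 2)
  have n1 : 0 ≤ᵐ[volume.restrict Ω] u :=
    (ae_restrict_iff' h.o.measurableSet).2 (Filter.Eventually.of_forall fun x hx => hpos x (subset_closure hx))
  rw [← ofReal_integral_eq_lintegral_ofReal i1 n1,
    ← ofReal_integral_eq_lintegral_ofReal i2 (Filter.Eventually.of_forall fun x => by positivity),
    ← ofReal_integral_eq_lintegral_ofReal i3 (Filter.Eventually.of_forall fun x => by positivity),
    finrank_euclideanSpace, Fintype.card_fin,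
    ← ENNReal.ofReal_toReal (measure_ball_lt_top (μ := volume) (x := (0 : EuclideanSpace ℝ (Fin N))) (r := c)).ne,
    ← ENNReal.ofReal_toReal (measure_ball_lt_top (μ := volume) (x := (0 : EuclideanSpace ℝ (Fin N))) (r := 1)).ne,
    ← hV, ← hV1] at key
  have p1 : 0 ≤ ∫ x in Ω, u x := integral_nonneg_of_ae n1
  have p3 : 0 ≤ ∫ x in Ω, ‖fderiv ℝ u x‖ ^ 2 := integral_nonneg fun x => by positivity
  generalize (∫ x in Ω, u x) = I1 at *
  generalize (∫ x in Ω, u x ^ 2) = I2 at *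
  generalize (∫ x in Ω, ‖fderiv ℝ u x‖ ^ 2) = I3 at *
  rw [← ENNReal.ofReal_pow p1, show (2 : ENNReal) = ENNReal.ofReal 2 by simp,
    ← ENNReal.ofReal_mul (by positivity), ← ENNReal.ofReal_mul (by positivity),
    ← ENNReal.ofReal_mul (by positivity), ← ENNReal.ofReal_mul (by positivity),
    ← ENNReal.ofReal_mul (by positivity), ← ENNReal.ofReal_mul (by positivity),
    ← ENNReal.ofReal_add (by positivity) (by positivity),
    ENNReal.ofReal_le_ofReal_iff (by positivity)] at key
  have := div_le_div_of_nonneg_right key hVpos.le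
  rw [mul_div_cancel_left₀ _ hVpos.ne'] at this
  refine this.trans_eq ?_
  field_simp
  ring

lemma aux_gron {F F' h : ℝ → ℝ} {a b κ : ℝ} (hab : a ≤ b) (hF : ContinuousOn F (Icc a b))
    (hd : ∀ t ∈ Ioo a b, HasDerivAt F (F' t) t) (hh : ContinuousOn h (Icc a b))
    (hle : ∀ t ∈ Ioo a b, F' t ≤ -κ * F t + h t) :
    exp (κ * b) * F b - exp (κ * a) * F a ≤ ∫ t in a..b, exp (κ * t) * h t := by
  have hexp : Continuous (fun t : ℝ => exp (κ * t)) := by fun_prop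
  refine intervalIntegral.sub_le_integral_of_hasDeriv_right_of_le hab (g := fun t => exp (κ * t) * F t)
    (g' := fun t => exp (κ * t) * κ * F t + exp (κ * t) * F' t)
    (hexp.continuousOn.mul hF) (fun t ht => ?_) ?_ (fun t ht => ?_)
  · have h1 : HasDerivAt (fun t : ℝ => exp (κ * t)) (exp (κ * t) * κ) t := by
      have := ((hasDerivAt_id t).const_mul κ).exp
      simpa using this
    exact (h1.mul (hd t ht)).hasDerivWithinAt
  · exact (hexp.continuousOn.mul hh).integrableOn_Icc
  · have := mul_le_mul_of_nonneg_left (hle t ht) (exp_pos (κ * t)).le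
    nlinarith

lemma aux_time_cont {N : ℕ} {S K : Set (EuclideanSpace ℝ (Fin N))} (hS : MeasurableSet S)
    (hK : IsCompact K) (hSK : S ⊆ K) {f : ℝ × EuclideanSpace ℝ (Fin N) → ℝ} {a b : ℝ}
    (hf : ContinuousOn f (Icc a b ×ˢ K)) :
    ContinuousOn (fun t => ∫ x in S, f (t, x)) (Icc a b) := by
  obtain ⟨C, hC⟩ := (isCompact_Icc.prod hK).exists_bound_of_continuousOn hf
  have hfin : volume S < ⊤ := (measure_mono hSK).trans_lt hK.measure_lt_top
  refine continuousOn_of_dominated (bound := fun _ => C) (fun t ht => ?_) (fun t ht => ?_) ?_ ?_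
  · have : ContinuousOn (fun x => f (t, x)) S :=
      hf.comp (by fun_prop) (fun x hx => ⟨ht, hSK hx⟩)
    exact this.aestronglyMeasurable hS
  · exact (ae_restrict_iff' hS).2 (Filter.Eventually.of_forall fun x hx => hC (t, x) ⟨ht, hSK hx⟩)
  · exact integrableOn_const hfin.ne
  · refine (ae_restrict_iff' hS).2 (Filter.Eventually.of_forall fun x hx => ?_)
    exact hf.comp (by fun_prop) (fun t ht => ⟨ht, hSK hx⟩)

lemma aux_time_deriv {N : ℕ} {S K : Set (EuclideanSpace ℝ (Fin N))} (hS : MeasurableSet S)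
    (hK : IsCompact K) (hSK : S ⊆ K) {f f' : ℝ × EuclideanSpace ℝ (Fin N) → ℝ} {a b : ℝ}
    (hf : ContinuousOn f (Icc a b ×ˢ K)) (hf' : ContinuousOn f' (Ioo a b ×ˢ K))
    (hd : ∀ t ∈ Ioo a b, ∀ x ∈ K, HasDerivAt (fun τ => f (τ, x)) (f' (t, x)) t)
    {t : ℝ} (ht : t ∈ Ioo a b) :
    HasDerivAt (fun t => ∫ x in S, f (t, x)) (∫ x in S, f' (t, x)) t := by
  obtain ⟨ε, hε, hball⟩ := Metric.nhds_basis_closedBall.mem_iff.1 (Ioo_mem_nhds ht.1 ht.2)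
  have hcb : ContinuousOn f' (Metric.closedBall t ε ×ˢ K) := hf'.mono (prod_mono hball subset_rfl)
  obtain ⟨C, hC⟩ := ((isCompact_closedBall t ε).prod hK).exists_bound_of_continuousOn hcb
  have hfin : volume S < ⊤ := (measure_mono hSK).trans_lt hK.measure_lt_top
  have hm : ∀ s ∈ Ioo a b, AEStronglyMeasurable (fun x => f (s, x)) (volume.restrict S) := by
    intro s hs
    have : ContinuousOn (fun x => f (s, x)) S :=
      hf.comp (by fun_prop) (fun x hx => ⟨Ioo_subset_Icc_self hs, hSK hx⟩)
    exact this.aestronglyMeasurable hS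
  refine (hasDerivAt_integral_of_dominated_loc_of_deriv_le (Metric.ball_mem_nhds t hε)
    (F := fun s x => f (s, x)) (F' := fun s x => f' (s, x)) (bound := fun _ => C) ?_ ?_ ?_ ?_ ?_ ?_).2
  · exact Filter.eventually_of_mem (Ioo_mem_nhds ht.1 ht.2) hm
  · have : ContinuousOn (fun x => f (t, x)) K :=
      hf.comp (by fun_prop) (fun x hx => ⟨Ioo_subset_Icc_self ht, hx⟩)
    exact (this.integrableOn_compact hK).mono_set hSK
  · have : ContinuousOn (fun x => f' (t, x)) S :=
      hf'.comp (by fun_prop) (fun x hx => ⟨ht, hSK hx⟩)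
    exact this.aestronglyMeasurable hS
  · exact (ae_restrict_iff' hS).2 (Filter.Eventually.of_forall fun x hx s hs =>
      hC (s, x) ⟨Metric.ball_subset_closedBall hs, hSK hx⟩)
  · exact integrableOn_const hfin.ne
  · exact (ae_restrict_iff' hS).2 (Filter.Eventually.of_forall fun x hx s hs =>
      hd s (hball (Metric.ball_subset_closedBall hs)) x (hSK hx))

structure SolHyp {N : ℕ} (Ω : Set (EuclideanSpace ℝ (Fin N))) (η : EuclideanSpace ℝ (Fin N) → ℝ)
    (T A : ℝ) (q qt : ℝ × EuclideanSpace ℝ (Fin N) → ℝ) : Prop where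
  cont : ContinuousOn q (Icc 0 T ×ˢ closure Ω)
  nn : ∀ t ∈ Icc 0 T, ∀ x ∈ closure Ω, 0 ≤ q (t, x)
  dt : ∀ t ∈ Ioo 0 T, ∀ x ∈ closure Ω, HasDerivAt (fun τ => q (τ, x)) (qt (t, x)) t
  qtc : ContinuousOn qt (Ioo 0 T ×ˢ closure Ω)
  c2 : ∀ t ∈ Ioo 0 T, C2cl Ω (fun z => q (t, z))
  ineq : ∀ t ∈ Ioo 0 T, ∀ x ∈ Ω, |qt (t, x) + spaceLaplacian (fun z => q (t, z)) x| ≤ A * q (t, x)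
  bd : ∀ t ∈ Ioo 0 T, ∀ x ∈ frontier Ω, ⟪gradient (fun z => q (t, z)) x, gradient η x⟫ = 0

lemma SolHyp.mono {N : ℕ} {Ω : Set (EuclideanSpace ℝ (Fin N))} {η : EuclideanSpace ℝ (Fin N) → ℝ}
    {T A T' : ℝ} {q qt : ℝ × EuclideanSpace ℝ (Fin N) → ℝ} (h : SolHyp Ω η T A q qt) (hT : T' ≤ T) :
    SolHyp Ω η T' A q qt where
  cont := h.cont.mono (prod_mono (Icc_subset_Icc_right hT) subset_rfl)
  nn t ht := h.nn t (Icc_subset_Icc_right hT ht)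
  dt t ht := h.dt t (Ioo_subset_Ioo_right hT ht)
  qtc := h.qtc.mono (prod_mono (Ioo_subset_Ioo_right hT) subset_rfl)
  c2 t ht := h.c2 t (Ioo_subset_Ioo_right hT ht)
  ineq t ht := h.ineq t (Ioo_subset_Ioo_right hT ht)
  bd t ht := h.bd t (Ioo_subset_Ioo_right hT ht)

lemma SolHyp.qcont {N : ℕ} {Ω : Set (EuclideanSpace ℝ (Fin N))} {η : EuclideanSpace ℝ (Fin N) → ℝ}
    {T A : ℝ} {q qt : ℝ × EuclideanSpace ℝ (Fin N) → ℝ} (h : SolHyp Ω η T A q qt) {t : ℝ}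
    (ht : t ∈ Icc 0 T) : ContinuousOn (fun x => q (t, x)) (closure Ω) :=
  h.cont.comp (by fun_prop) (fun x hx => ⟨ht, hx⟩)

lemma SolHyp.qtcont {N : ℕ} {Ω : Set (EuclideanSpace ℝ (Fin N))} {η : EuclideanSpace ℝ (Fin N) → ℝ}
    {T A : ℝ} {q qt : ℝ × EuclideanSpace ℝ (Fin N) → ℝ} (h : SolHyp Ω η T A q qt) {t : ℝ}
    (ht : t ∈ Ioo 0 T) : ContinuousOn (fun x => qt (t, x)) (closure Ω) :=
  h.qtc.comp (by fun_prop) (fun x hx => ⟨ht, hx⟩)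

lemma aux_mass {N : ℕ} {Ω ω₀ : Set (EuclideanSpace ℝ (Fin N))}
    {η : EuclideanSpace ℝ (Fin N) → ℝ} (hD : DomHyp Ω ω₀ η) {T A : ℝ}
    {q qt : ℝ × EuclideanSpace ℝ (Fin N) → ℝ} (h : SolHyp Ω η T A q qt) {t t1 : ℝ} (h0 : 0 ≤ t)
    (h1 : t ≤ t1) (h2 : t1 ≤ T) :
    exp (A * t) * ∫ x in Ω, q (t, x) ≤ exp (A * t1) * ∫ x in Ω, q (t1, x) := by
  have hK : IsCompact (closure Ω) := hD.b.isCompact_closure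
  have hc := aux_time_cont hD.o.measurableSet hK subset_closure h.cont
  have hd := fun s (hs : s ∈ Ioo 0 T) =>
    aux_time_deriv hD.o.measurableSet hK subset_closure h.cont h.qtc h.dt hs
  have key := aux_gron (F := fun t => - ∫ x in Ω, q (t, x)) (F' := fun t => - ∫ x in Ω, qt (t, x))
    (h := fun _ => 0) (κ := A) h1 (hc.mono (Icc_subset_Icc h0 h2)).neg
    (fun s hs => (hd s ⟨h0.trans_lt hs.1, hs.2.trans_le h2⟩).neg) continuousOn_const ?_
  · simp only [mul_zero, intervalIntegral.integral_zero] at key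
    linarith
  · intro s hs
    have hs' : s ∈ Ioo 0 T := ⟨h0.trans_lt hs.1, hs.2.trans_le h2⟩
    have i1 := aux_integrableOn hD.b (h.qcont (Ioo_subset_Icc_self hs'))
    have i2 := aux_integrableOn hD.b (h.qtcont hs')
    have i3 := aux_integrableOn hD.b (h.c2 s hs').lap_cont
    have e := aux_int_lap hD (h.c2 s hs') (h.bd s hs')
    have : ∫ x in Ω, (- A * q (s, x) - spaceLaplacian (fun z => q (s, z)) x) ≤ ∫ x in Ω, qt (s, x) := by
      refine setIntegral_mono_on ((i1.const_mul (-A)).sub i3) i2 hD.o.measurableSet fun x hx => ?_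
      have := (abs_le.1 (h.ineq s hs' x hx)).1
      linarith
    rw [integral_sub (i1.const_mul (-A)) i3, integral_const_mul, e] at this
    linarith

lemma aux_bounds {N : ℕ} {Ω ω₀ : Set (EuclideanSpace ℝ (Fin N))}
    {η : EuclideanSpace ℝ (Fin N) → ℝ} (h : DomHyp Ω ω₀ η) :
    ∃ c > (0:ℝ), ∃ D > (0:ℝ), ∃ M > (0:ℝ),
      (∀ x ∈ Ω \ ω₀, c ≤ ‖fderiv ℝ η x‖ ^ 2) ∧
      (∀ x ∈ closure Ω, |spaceLaplacian η x| ≤ D) ∧ (∀ x ∈ closure Ω, η x ≤ M) ∧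
      (∀ x ∈ closure Ω, 0 ≤ η x) := by
  have hc1 : Continuous (fderiv ℝ η) := h.C2.continuous_fderiv (by norm_num)
  have hK : IsCompact (closure Ω) := h.b.isCompact_closure
  obtain ⟨γ, hγ, hγb⟩ : ∃ γ > (0:ℝ), ∀ x ∈ Ω \ ω₀, γ ≤ ‖fderiv ℝ η x‖ ^ 2 := by
    have hK : IsCompact (closure (Ω \ ω₀)) :=
      (h.b.subset sdiff_subset).isCompact_closure
    rcases (closure (Ω \ ω₀)).eq_empty_or_nonempty with h0 | hne
    · refine ⟨1, one_pos, fun x hx => ?_⟩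
      have := subset_closure hx
      rw [h0] at this; exact this.elim
    · obtain ⟨x0, hx0, hmin⟩ := hK.exists_isMinOn hne (hc1.norm.pow 2).continuousOn
      refine ⟨‖fderiv ℝ η x0‖ ^ 2, ?_, fun x hx => hmin (subset_closure hx)⟩
      rw [← aux_norm_grad]; exact pow_pos (h.gr x0 hx0) 2
  obtain ⟨D, hD⟩ := hK.exists_bound_of_continuousOn (C2cl.of (Ω := Ω) h.C2).lap_cont
  obtain ⟨M, hM⟩ := hK.exists_bound_of_continuousOn h.C2.continuous.continuousOn
  refine ⟨γ, hγ, max D 1, by positivity, max M 1, by positivity, hγb, fun x hx => ?_, fun x hx => ?_,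
    fun x hx => ?_⟩
  · exact (hD x hx).trans (le_max_left _ _)
  · exact (le_abs_self _).trans ((hM x hx).trans (le_max_left _ _))
  · by_cases hx' : x ∈ Ω
    · exact (h.pos x hx').le
    · exact (h.bd x (by rw [h.o.frontier_eq]; exact ⟨hx, hx'⟩)).ge

lemma aux_carl_gron {N : ℕ} {Ω ω₀ ω : Set (EuclideanSpace ℝ (Fin N))}
    {η : EuclideanSpace ℝ (Fin N) → ℝ} (hD : DomHyp Ω ω₀ η) (hωo : IsOpen ω) (h0ω : ω₀ ⊆ ω)
    (hωΩ : ω ⊆ Ω) {c D M : ℝ}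
    (hc : ∀ x ∈ Ω \ ω₀, c ≤ ‖fderiv ℝ η x‖ ^ 2)
    (hDb : ∀ x ∈ closure Ω, |spaceLaplacian η x| ≤ D) (hM : ∀ x ∈ closure Ω, η x ≤ M)
    {T A s κ : ℝ} (hs : 0 ≤ s) (hκ0 : 0 ≤ κ)
    (hκ1 : A + s * D ≤ κ) (hκ2 : 2 * κ ≤ c * s ^ 2)
    {q qt : ℝ × EuclideanSpace ℝ (Fin N) → ℝ} (h : SolHyp Ω η T A q qt)
    {t : ℝ} (ht : t ∈ Ioo 0 T) :
    ∫ x in Ω, qt (t, x) * exp (s * η x) ≤ -κ * (∫ x in Ω, q (t, x) * exp (s * η x)) +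
      2 * κ * exp (s * M) * ∫ x in ω, q (t, x) := by
  have ht' := Ioo_subset_Icc_self ht
  have hηc : Continuous η := hD.C2.continuous
  have hexp : Continuous (fun x => exp (s * η x)) := by fun_prop
  have hlapη := (C2cl.of (Ω := Ω) hD.C2).lap_cont
  have hc1 : Continuous (fderiv ℝ η) := hD.C2.continuous_fderiv (by norm_num)
  have hq := h.qcont ht'
  have hqt := h.qtcont ht
  have hlap := (h.c2 t ht).lap_cont
  have hnn := h.nn t ht'
  have j1 : IntegrableOn (fun x => qt (t, x) * exp (s * η x)) Ω :=
    aux_integrableOn hD.b (hqt.mul hexp.continuousOn)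
  have j2 : IntegrableOn (fun x => q (t, x) * exp (s * η x)) Ω :=
    aux_integrableOn hD.b (hq.mul hexp.continuousOn)
  have j3 : IntegrableOn (fun x => exp (s * η x) * spaceLaplacian (fun z => q (t, z)) x) Ω :=
    aux_integrableOn hD.b (hexp.continuousOn.mul hlap)
  have j4 : IntegrableOn (fun x => q (t, x) * (exp (s * η x) *
      (s * spaceLaplacian η x + s ^ 2 * ‖fderiv ℝ η x‖ ^ 2))) Ω :=
    aux_integrableOn hD.b (hq.mul (hexp.continuousOn.mul ((continuousOn_const.mul hlapη).add
      (continuousOn_const.mul (hc1.norm.pow 2).continuousOn))))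
  have j5 : IntegrableOn (fun x => q (t, x)) Ω := aux_integrableOn hD.b hq
  have hω0m : MeasurableSet ω₀ := hD.o0.measurableSet
  have hcarl := aux_int_carl hD (h.c2 t ht) (h.bd t ht) hnn hs
  have s1 : ∫ x in Ω, qt (t, x) * exp (s * η x) ≤
      ∫ x in Ω, (A * (q (t, x) * exp (s * η x)) -
        exp (s * η x) * spaceLaplacian (fun z => q (t, z)) x) := by
    refine setIntegral_mono_on j1 ((j2.const_mul A).sub j3) hD.o.measurableSet fun x hx => ?_
    have := mul_le_mul_of_nonneg_right (abs_le.1 (h.ineq t ht x hx)).2 (exp_pos (s * η x)).le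
    nlinarith
  rw [integral_sub (j2.const_mul A) j3, integral_const_mul] at s1
  have j6 : IntegrableOn (fun x => ω₀.indicator (fun x => q (t, x)) x) Ω := j5.indicator hω0m
  have s2 : ∫ x in Ω, (A * (q (t, x) * exp (s * η x)) - q (t, x) * (exp (s * η x) *
      (s * spaceLaplacian η x + s ^ 2 * ‖fderiv ℝ η x‖ ^ 2))) ≤
      ∫ x in Ω, (-κ * (q (t, x) * exp (s * η x)) + 2 * κ * exp (s * M) *
        ω₀.indicator (fun x => q (t, x)) x) := by
    refine setIntegral_mono_on ((j2.const_mul A).sub j4) ((j2.const_mul (-κ)).add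
      (j6.const_mul (2 * κ * exp (s * M)))) hD.o.measurableSet fun x hx => ?_
    have hxc := subset_closure hx
    have q0 := hnn x hxc
    have e0 := exp_pos (s * η x)
    have l1 := (abs_le.1 (hDb x hxc)).1
    have l2 : -(s * D) ≤ s * spaceLaplacian η x := by
      have := mul_le_mul_of_nonneg_left l1 hs; linarith
    by_cases hx0 : x ∈ ω₀
    · rw [indicator_of_mem hx0]
      have l3 : exp (s * η x) ≤ exp (s * M) :=
        exp_le_exp.2 (mul_le_mul_of_nonneg_left (hM x hxc) hs)
      have l4 : 0 ≤ s ^ 2 * ‖fderiv ℝ η x‖ ^ 2 := by positivity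
      have l5 : 0 ≤ q (t, x) * exp (s * η x) * (κ - (A - (s * spaceLaplacian η x +
        s ^ 2 * ‖fderiv ℝ η x‖ ^ 2))) := mul_nonneg (by positivity) (by linarith)
      have l6 : 2 * κ * q (t, x) * exp (s * η x) ≤ 2 * κ * q (t, x) * exp (s * M) := by gcongr
      nlinarith
    · rw [indicator_of_notMem hx0]
      have l3 := mul_le_mul_of_nonneg_left (hc x ⟨hx, hx0⟩) (sq_nonneg s)
      have l5 : 0 ≤ q (t, x) * exp (s * η x) * (-κ - (A - (s * spaceLaplacian η x +
        s ^ 2 * ‖fderiv ℝ η x‖ ^ 2))) := mul_nonneg (by positivity) (by linarith)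
      nlinarith
  rw [integral_sub (j2.const_mul A) j4, integral_add (j2.const_mul (-κ))
    (j6.const_mul (2 * κ * exp (s * M))), integral_const_mul, integral_const_mul, integral_const_mul,
    setIntegral_indicator hω0m] at s2
  have s3 : ∫ x in Ω ∩ ω₀, q (t, x) ≤ ∫ x in ω, q (t, x) := by
    refine setIntegral_mono_set (j5.mono_set hωΩ) ?_ ?_
    · exact (ae_restrict_iff' hωo.measurableSet).2
        (Filter.Eventually.of_forall fun x hx => hnn x (subset_closure (hωΩ hx)))
    · exact (inter_subset_right.trans h0ω).eventuallyLE
  have s4 := mul_le_mul_of_nonneg_left s3 (show 0 ≤ 2 * κ * exp (s * M) by positivity)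
  linarith

set_option maxHeartbeats 1000000 in
lemma aux_param {c D M : ℝ} (hc : 0 < c) (hD : 0 < D) (hM : 0 < M) :
    ∃ K > (0:ℝ), ∀ T A : ℝ, 0 < T → T ≤ 1 → 0 ≤ A → ∃ s κ : ℝ, 0 ≤ s ∧ 0 ≤ κ ∧ A + s * D ≤ κ ∧
      2 * κ ≤ c * s ^ 2 ∧ A * T / 2 + s * M + 1 ≤ κ * T / 2 ∧
      2 * κ * exp (κ * T / 2) ≤ exp (K * (1 + 1 / T + T * A + √A)) := by
  obtain ⟨σ, h1, h2, h3, h4⟩ : ∃ σ : ℝ, 1 ≤ σ ∧ 12 ≤ c * σ ∧ 12 * M ≤ c * σ ∧ 4 * D ≤ c * σ := by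
    refine ⟨1 + 12 / c + 12 * M / c + 4 * D / c, ?_, ?_, ?_, ?_⟩
    · have : 0 ≤ 12 / c + 12 * M / c + 4 * D / c := by positivity
      linarith
    all_goals
      have e : c * (1 + 12 / c + 12 * M / c + 4 * D / c) = c + 12 + 12 * M + 4 * D := by field_simp
      rw [e]; linarith
  refine ⟨c + 2 * σ + c * σ ^ 2, by positivity, fun T A hT hT1 hA => ?_⟩
  set X := 1 + 1 / T + √A with hX
  set s := σ * X with hs
  have r0 : 0 ≤ √A := sqrt_nonneg A
  have rA : √A ^ 2 = A := sq_sqrt hA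
  have iT : 0 < 1 / T := by positivity
  have hX1 : 1 ≤ X := by linarith
  have hXA : A ≤ X ^ 2 := by rw [← rA]; gcongr; linarith
  have hXT : 1 ≤ X * T := by
    have : X * T = T + 1 + √A * T := by rw [hX]; field_simp
    rw [this]; nlinarith
  have hXT2 : X ^ 2 * T ≤ 3 * (T + 1 / T + T * A) := by
    have e : 3 * (T + 1 / T + T * A) = 3 * (1 + (1 / T) ^ 2 + √A ^ 2) * T := by
      rw [rA]; field_simp
    rw [e]
    gcongr
    rw [hX]
    nlinarith [sq_nonneg (1 - 1 / T), sq_nonneg (1 - √A), sq_nonneg (1 / T - √A)]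
  have hs0 : 0 ≤ s := by positivity
  have hσc : 12 ≤ c * σ ^ 2 := by nlinarith
  refine ⟨s, c * s ^ 2 / 2, hs0, by positivity, ?_, by linarith, ?_, ?_⟩
  · have a1 : A * 12 ≤ c * s ^ 2 := by
      have : c * s ^ 2 = (c * σ ^ 2) * X ^ 2 := by rw [hs]; ring
      rw [this]; nlinarith
    have a2 : 4 * (s * D) ≤ c * s ^ 2 := by
      have : c * s ^ 2 = s * ((c * σ) * X) := by rw [hs]; ring
      rw [this]
      have : 4 * D ≤ (c * σ) * X := by nlinarith
      nlinarith
    linarith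
  · have b1 : 12 * (A * T) ≤ c * s ^ 2 * T := by
      have : c * s ^ 2 * T = ((c * σ ^ 2) * X ^ 2) * T := by rw [hs]; ring
      rw [this]
      have : 12 * A ≤ (c * σ ^ 2) * X ^ 2 := by nlinarith
      nlinarith
    have b2 : 12 * (s * M) ≤ c * s ^ 2 * T := by
      have : c * s ^ 2 * T = s * ((c * σ) * (X * T)) := by rw [hs]; ring
      rw [this]
      have : 12 * M ≤ (c * σ) * (X * T) := by nlinarith
      nlinarith
    have b3 : 12 ≤ c * s ^ 2 * T := by
      have : c * s ^ 2 * T = (c * σ ^ 2) * (X * (X * T)) := by rw [hs]; ring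
      rw [this]
      have : 1 ≤ X * (X * T) := by nlinarith
      nlinarith
    linarith
  · have c1 : 2 * (c * s ^ 2 / 2) ≤ exp (c + 2 * s) := by
      have e1 : c ≤ exp c := by linarith [add_one_le_exp c]
      have e2 : s ≤ exp s := by linarith [add_one_le_exp s]
      rw [exp_add, show 2 * s = s + s by ring, exp_add]
      calc 2 * (c * s ^ 2 / 2) = c * (s * s) := by ring
        _ ≤ _ := mul_le_mul e1 (mul_le_mul e2 e2 hs0 (exp_pos s).le) (by positivity) (exp_pos c).le
    calc 2 * (c * s ^ 2 / 2) * exp (c * s ^ 2 / 2 * T / 2)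
        ≤ exp (c + 2 * s) * exp (c * s ^ 2 / 2 * T / 2) :=
          mul_le_mul_of_nonneg_right c1 (exp_pos _).le
      _ = exp (c + 2 * s + c * s ^ 2 / 2 * T / 2) := by rw [exp_add (c + 2 * s)]
      _ ≤ _ := by
        apply exp_le_exp.2
        have tA : 0 ≤ T * A := by positivity
        have d1 : X ≤ 1 + 1 / T + T * A + √A := by linarith
        have d2 : X ^ 2 * T ≤ 4 * (1 + 1 / T + T * A + √A) := by linarith
        set Z := 1 + 1 / T + T * A + √A
        have d0 : 1 ≤ Z := by linarith
        have d3 : c * s ^ 2 / 2 * T / 2 = c * σ ^ 2 * (X ^ 2 * T) / 4 := by rw [hs]; ring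
        rw [d3]
        have d4 : c * σ ^ 2 * (X ^ 2 * T) ≤ c * σ ^ 2 * (4 * Z) := by gcongr
        have d5 : σ * X ≤ σ * Z := by gcongr
        rw [hs]
        nlinarith

lemma aux_L1obs {N : ℕ} {Ω ω₀ ω : Set (EuclideanSpace ℝ (Fin N))}
    {η : EuclideanSpace ℝ (Fin N) → ℝ} (hD : DomHyp Ω ω₀ η) (hωo : IsOpen ω) (h0ω : ω₀ ⊆ ω)
    (hωΩ : ω ⊆ Ω) :
    ∃ K > (0:ℝ), ∀ T A : ℝ, 0 < T → T ≤ 1 → 0 ≤ A →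
      ∀ q qt : ℝ × EuclideanSpace ℝ (Fin N) → ℝ, SolHyp Ω η T A q qt →
      ∫ x in Ω, q (T / 2, x) ≤ exp (K * (1 + 1 / T + T * A + √A)) *
        ∫ t in (0:ℝ)..T, ∫ x in ω, q (t, x) := by
  obtain ⟨c, hc, D, hDp, M, hMp, hcb, hDb, hM, hη0⟩ := aux_bounds hD
  obtain ⟨K, hK, hpar⟩ := aux_param hc hDp hMp
  refine ⟨K, hK, fun T A hT hT1 hA q qt h => ?_⟩
  obtain ⟨s, κ, hs, hκ, k1, k2, k3, k4⟩ := hpar T A hT hT1 hA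
  have hcl : IsCompact (closure Ω) := hD.b.isCompact_closure
  have hηc : Continuous η := hD.C2.continuous
  have hexp : Continuous (fun p : ℝ × EuclideanSpace ℝ (Fin N) => exp (s * η p.2)) := by fun_prop
  have hexpx : Continuous (fun x => exp (s * η x)) := by fun_prop
  have hfc : ContinuousOn (fun p : ℝ × EuclideanSpace ℝ (Fin N) => q p * exp (s * η p.2))
    (Icc 0 T ×ˢ closure Ω) := h.cont.mul hexp.continuousOn
  have hfc' : ContinuousOn (fun p : ℝ × EuclideanSpace ℝ (Fin N) => qt p * exp (s * η p.2))
    (Ioo 0 T ×ˢ closure Ω) := h.qtc.mul hexp.continuousOn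
  have hFc := aux_time_cont hD.o.measurableSet hcl subset_closure hfc
  have hFd := fun t (ht : t ∈ Ioo 0 T) =>
    aux_time_deriv hD.o.measurableSet hcl subset_closure hfc hfc'
      (fun t ht x hx => (h.dt t ht x hx).mul_const (exp (s * η x))) ht
  have hWc := aux_time_cont hωo.measurableSet hcl (hωΩ.trans subset_closure) h.cont
  have hsub : Icc (T / 2) T ⊆ Icc 0 T := Icc_subset_Icc_left (by linarith)
  have key := aux_gron (κ := κ) (show T / 2 ≤ T by linarith) (hFc.mono hsub)
    (fun t ht => hFd t ⟨by linarith [ht.1], ht.2⟩)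
    (h := fun t => 2 * κ * exp (s * M) * ∫ x in ω, q (t, x))
    (continuousOn_const.mul (hWc.mono hsub))
    (fun t ht => aux_carl_gron hD hωo h0ω hωΩ hcb hDb hM hs hκ k1 k2 h ⟨by linarith [ht.1], ht.2⟩)
  set J := ∫ t in (0:ℝ)..T, ∫ x in ω, q (t, x) with hJ
  have hW0 : ∀ t ∈ Icc 0 T, 0 ≤ ∫ x in ω, q (t, x) := fun t ht =>
    setIntegral_nonneg hωo.measurableSet fun x hx => h.nn t ht x (subset_closure (hωΩ hx))
  have wi : IntervalIntegrable (fun t => ∫ x in ω, q (t, x)) volume 0 T := by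
    apply ContinuousOn.intervalIntegrable; rwa [uIcc_of_le hT.le]
  have hR : ∫ t in (T / 2)..T, exp (κ * t) * (2 * κ * exp (s * M) * ∫ x in ω, q (t, x)) ≤
      exp (κ * T) * (2 * κ * exp (s * M)) * J := by
    have r1 : ∫ t in (T / 2)..T, exp (κ * t) * (2 * κ * exp (s * M) * ∫ x in ω, q (t, x)) ≤
        ∫ t in (T / 2)..T, exp (κ * T) * (2 * κ * exp (s * M)) * ∫ x in ω, q (t, x) := by
      refine intervalIntegral.integral_mono_on (by linarith) ?_ ?_ fun t ht => ?_
      · apply ContinuousOn.intervalIntegrable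
        rw [uIcc_of_le (by linarith)]
        exact (Continuous.continuousOn (by fun_prop)).mul (continuousOn_const.mul (hWc.mono hsub))
      · apply ContinuousOn.intervalIntegrable
        rw [uIcc_of_le (by linarith)]
        exact continuousOn_const.mul (hWc.mono hsub)
      · rw [← mul_assoc]
        have := hW0 t (hsub ht)
        have h2 : exp (κ * t) ≤ exp (κ * T) := exp_le_exp.2 (mul_le_mul_of_nonneg_left ht.2 hκ)
        gcongr
    refine r1.trans ?_
    rw [intervalIntegral.integral_const_mul]
    refine mul_le_mul_of_nonneg_left ?_ (by positivity)
    refine intervalIntegral.integral_mono_interval (by linarith) (by linarith) le_rfl ?_ wi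
    exact (ae_restrict_iff' measurableSet_Ioc).2
      (Filter.Eventually.of_forall fun t ht => hW0 t (Ioc_subset_Icc_self ht))
  have hTm : T ∈ Icc 0 T := ⟨hT.le, le_rfl⟩
  have h2m : T / 2 ∈ Icc 0 T := ⟨by linarith, by linarith⟩
  have hmass := aux_mass hD h (t := T / 2) (t1 := T) (by linarith) (by linarith) le_rfl
  set m := ∫ x in Ω, q (T / 2, x) with hm
  have m0 : 0 ≤ m := setIntegral_nonneg hD.o.measurableSet fun x hx => h.nn _ h2m x (subset_closure hx)
  have i1 := aux_integrableOn hD.b (h.qcont hTm)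
  have i2 := aux_integrableOn hD.b (h.qcont h2m)
  have j1 : IntegrableOn (fun x => q (T, x) * exp (s * η x)) Ω :=
    aux_integrableOn hD.b ((h.qcont hTm).mul hexpx.continuousOn)
  have j2 : IntegrableOn (fun x => q (T / 2, x) * exp (s * η x)) Ω :=
    aux_integrableOn hD.b ((h.qcont h2m).mul hexpx.continuousOn)
  have f1 : ∫ x in Ω, q (T, x) ≤ ∫ x in Ω, q (T, x) * exp (s * η x) := by
    refine setIntegral_mono_on i1 j1 hD.o.measurableSet fun x hx => ?_
    have hx' := subset_closure hx
    exact le_mul_of_one_le_right (h.nn _ hTm x hx')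
      (one_le_exp (mul_nonneg hs (hη0 x hx')))
  have f2 : ∫ x in Ω, q (T / 2, x) * exp (s * η x) ≤ m * exp (s * M) := by
    rw [hm, ← integral_mul_const]
    refine setIntegral_mono_on j2 (i2.mul_const _) hD.o.measurableSet fun x hx => ?_
    have hx' := subset_closure hx
    exact mul_le_mul_of_nonneg_left (exp_le_exp.2 (mul_le_mul_of_nonneg_left (hM x hx') hs))
      (h.nn _ h2m x hx')
  have J0 : 0 ≤ J := intervalIntegral.integral_nonneg hT.le fun t ht => hW0 t ht
  -- combine
  have g1 : exp (κ * T) * (exp (-(A * T / 2)) * m) ≤ exp (κ * T) * ∫ x in Ω, q (T, x) * exp (s * η x) := by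
    refine mul_le_mul_of_nonneg_left (le_trans ?_ f1) (exp_pos _).le
    have := mul_le_mul_of_nonneg_left hmass (exp_pos (-(A * T))).le
    rw [← mul_assoc, ← mul_assoc, ← exp_add, ← exp_add] at this
    rw [show -(A * T) + A * (T / 2) = -(A * T / 2) by ring, show -(A * T) + A * T = 0 by ring,
      exp_zero, one_mul] at this
    exact this
  have g2 := mul_le_mul_of_nonneg_left f2 (exp_pos (κ * (T / 2))).le
  simp only at key
  have g3 : exp (κ * T) * (exp (-(A * T / 2)) * m) ≤ exp (κ * (T / 2)) * (m * exp (s * M)) +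
      exp (κ * T) * (2 * κ * exp (s * M)) * J := by linarith
  have x1 : exp (κ * T) = exp (κ * (T / 2)) * exp (κ * T / 2) := by rw [← exp_add]; ring_nf
  have x2 : 2 * exp (s * M) ≤ exp (κ * T / 2) * exp (-(A * T / 2)) := by
    rw [← exp_add]
    have : exp (1 + s * M) ≤ exp (κ * T / 2 + -(A * T / 2)) := exp_le_exp.2 (by linarith)
    rw [exp_add] at this
    have h2 : (2:ℝ) ≤ exp 1 := by linarith [add_one_le_exp (1:ℝ)]
    exact (mul_le_mul_of_nonneg_right h2 (exp_pos _).le).trans this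
  have g4 : exp (κ * (T / 2)) * exp (s * M) * m ≤ exp (κ * (T / 2)) * exp (s * M) *
      (2 * κ * exp (κ * T / 2) * J) := by
    have y1 := mul_le_mul_of_nonneg_left x2 (mul_nonneg (exp_pos (κ * (T / 2))).le m0)
    rw [x1] at g3
    linarith
  have g5 := le_of_mul_le_mul_left g4 (by positivity)
  exact g5.trans (mul_le_mul_of_nonneg_right k4 J0)

lemma aux_smooth_diff {N : ℕ} {Ω ω₀ : Set (EuclideanSpace ℝ (Fin N))}
    {η : EuclideanSpace ℝ (Fin N) → ℝ} (hD : DomHyp Ω ω₀ η) {T A : ℝ}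
    {q qt : ℝ × EuclideanSpace ℝ (Fin N) → ℝ} (h : SolHyp Ω η T A q qt) {t : ℝ} (ht : t ∈ Ioo 0 T) :
    2 * (∫ x in Ω, ‖fderiv ℝ (fun z => q (t, z)) x‖ ^ 2) - 2 * A * (∫ x in Ω, q (t, x) ^ 2) ≤
      ∫ x in Ω, 2 * q (t, x) * qt (t, x) := by
  have ht' := Ioo_subset_Icc_self ht
  have hq := h.qcont ht'
  have j1 : IntegrableOn (fun x => q (t, x) ^ 2) Ω := aux_integrableOn hD.b (hq.pow 2)
  have j2 : IntegrableOn (fun x => q (t, x) * spaceLaplacian (fun z => q (t, z)) x) Ω :=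
    aux_integrableOn hD.b (hq.mul (h.c2 t ht).lap_cont)
  have j3 : IntegrableOn (fun x => 2 * q (t, x) * qt (t, x)) Ω :=
    aux_integrableOn hD.b ((continuousOn_const.mul hq).mul (h.qtcont ht))
  have e := aux_int_energy hD (h.c2 t ht) (h.bd t ht)
  have : ∫ x in Ω, (-2 * (q (t, x) * spaceLaplacian (fun z => q (t, z)) x) - 2 * A * q (t, x) ^ 2) ≤
      ∫ x in Ω, 2 * q (t, x) * qt (t, x) := by
    refine setIntegral_mono_on ((j2.const_mul (-2)).sub (j1.const_mul (2 * A))) j3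
      hD.o.measurableSet fun x hx => ?_
    have a1 := (abs_le.1 (h.ineq t ht x hx)).1
    have a2 := mul_le_mul_of_nonneg_left a1 (h.nn t ht' x (subset_closure hx))
    nlinarith
  rw [integral_sub (j2.const_mul (-2)) (j1.const_mul (2 * A)), integral_const_mul, integral_const_mul, e] at this
  linarith

lemma aux_smooth_param {N k : ℕ} {C1 C2 τ y E m : ℝ} (hk : N + 1 ≤ k) (hC1 : 0 < C1) (hC2 : 0 < C2)
    (hτ : 0 < τ) (hτ1 : τ ≤ 1) {δ : ℝ} (hδ : 0 < δ) (hδ1 : δ ≤ 1) (hδ2 : δ ^ 2 = 2 * τ / (k * C1))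
    (hn : y ≤ C1 * δ ^ 2 * E + C2 * (δ ^ N)⁻¹ * m ^ 2) :
    k * τ ^ (k - 1) * y ≤ 2 * τ ^ k * E + k * C2 * (k * C1 / 2) ^ N * m ^ 2 := by
  have hk0 : (0:ℝ) < k := by exact_mod_cast (by omega : 0 < k)
  have e1 : (δ ^ N)⁻¹ ≤ (k * C1 / 2) ^ N * (τ ^ N)⁻¹ := by
    have : (k * C1 / 2) ^ N * (τ ^ N)⁻¹ = ((δ ^ 2) ^ N)⁻¹ := by
      rw [hδ2, ← inv_pow, ← inv_pow, ← mul_pow]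
      congr 1
      field_simp
    rw [this]
    apply inv_anti₀ (by positivity)
    exact pow_le_pow_left₀ (by positivity) (by nlinarith) N
  have e2 : τ ^ (k - 1) * (τ ^ N)⁻¹ ≤ 1 := by
    rw [← div_eq_mul_inv, div_le_one (by positivity)]
    exact pow_le_pow_of_le_one hτ.le hτ1 (by omega)
  have e3 : τ ^ (k - 1) * (δ ^ N)⁻¹ ≤ (k * C1 / 2) ^ N := by
    calc τ ^ (k - 1) * (δ ^ N)⁻¹ ≤ τ ^ (k - 1) * ((k * C1 / 2) ^ N * (τ ^ N)⁻¹) := by gcongr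
      _ = (k * C1 / 2) ^ N * (τ ^ (k - 1) * (τ ^ N)⁻¹) := by ring
      _ ≤ (k * C1 / 2) ^ N * 1 := by gcongr
      _ = _ := mul_one _
  have e4 : τ ^ k = τ ^ (k - 1) * τ := by rw [← pow_succ]; congr 1; omega
  have e5 : C1 * δ ^ 2 = 2 * τ / k := by rw [hδ2]; field_simp
  rw [e5] at hn
  calc k * τ ^ (k - 1) * y ≤ k * τ ^ (k - 1) * (2 * τ / k * E + C2 * (δ ^ N)⁻¹ * m ^ 2) := by gcongr
    _ = 2 * τ ^ k * E + k * C2 * (τ ^ (k - 1) * (δ ^ N)⁻¹) * m ^ 2 := by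
      rw [e4]; field_simp
    _ ≤ _ := by gcongr

lemma aux_smooth {N : ℕ} {Ω ω₀ : Set (EuclideanSpace ℝ (Fin N))}
    {η : EuclideanSpace ℝ (Fin N) → ℝ} (hD : DomHyp Ω ω₀ η) :
    ∃ K > (0:ℝ), ∀ T A : ℝ, 0 < T → T ≤ 1 → 0 ≤ A →
      ∀ q qt : ℝ × EuclideanSpace ℝ (Fin N) → ℝ, SolHyp Ω η T A q qt →
      ∫ x in Ω, q (0, x) ^ 2 ≤ exp (K * (1 + 1 / T + T * A + √A)) *
        (∫ x in Ω, q (T / 2, x)) ^ 2 := by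
  obtain ⟨δ₀, hδ₀, C1, hC1, C2, hC2, hN⟩ := aux_nash hD
  obtain ⟨k, hk1, hk2, hk3⟩ : ∃ k : ℕ, N + 1 ≤ k ∧ 1 / (C1 * δ₀ ^ 2) ≤ k ∧ 1 / C1 ≤ k := by
    obtain ⟨a, ha⟩ := exists_nat_ge (1 / (C1 * δ₀ ^ 2))
    obtain ⟨b, hb⟩ := exists_nat_ge (1 / C1)
    refine ⟨N + 1 + a + b, by omega, ?_, ?_⟩
    · push_cast; have : (0:ℝ) ≤ N := by positivity
      have : (0:ℝ) ≤ b := by positivity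
      linarith
    · push_cast; have : (0:ℝ) ≤ N := by positivity
      have : (0:ℝ) ≤ a := by positivity
      linarith
  have hk0 : (0:ℝ) < k := by exact_mod_cast (by omega : 0 < k)
  set C3 : ℝ := k * C2 * (k * C1 / 2) ^ N with hC3
  have hC3p : 0 < C3 := by positivity
  refine ⟨2 * k + C3 + 4, by positivity, fun T A hT hT1 hA q qt h => ?_⟩
  have hcl : IsCompact (closure Ω) := hD.b.isCompact_closure
  have hfc : ContinuousOn (fun p : ℝ × EuclideanSpace ℝ (Fin N) => q p ^ 2)
    (Icc 0 T ×ˢ closure Ω) := h.cont.pow 2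
  have hfc' : ContinuousOn (fun p : ℝ × EuclideanSpace ℝ (Fin N) => 2 * q p * qt p)
    (Ioo 0 T ×ˢ closure Ω) := (continuousOn_const.mul (h.cont.mono
      (prod_mono Ioo_subset_Icc_self subset_rfl))).mul h.qtc
  have hyc := aux_time_cont hD.o.measurableSet hcl subset_closure hfc
  have hyd := fun t (ht : t ∈ Ioo 0 T) =>
    aux_time_deriv hD.o.measurableSet hcl subset_closure hfc hfc'
      (fun t ht x hx => by simpa using (h.dt t ht x hx).fun_pow 2) ht
  have h2m : T / 2 ∈ Icc 0 T := ⟨by linarith, by linarith⟩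
  have hmass : ∀ t ∈ Ioo 0 (T / 2), (∫ x in Ω, q (t, x)) ^ 2 ≤
      exp (2 * (A * T)) * (∫ x in Ω, q (T / 2, x)) ^ 2 := by
    intro t ht
    have h1 := aux_mass hD h (t := t) (t1 := T / 2) ht.1.le ht.2.le (by linarith)
    have p1 : 0 ≤ ∫ x in Ω, q (t, x) := setIntegral_nonneg hD.o.measurableSet
      fun x hx => h.nn _ ⟨ht.1.le, by linarith [ht.2]⟩ x (subset_closure hx)
    have p2 : 0 ≤ ∫ x in Ω, q (T / 2, x) := setIntegral_nonneg hD.o.measurableSet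
      fun x hx => h.nn _ h2m x (subset_closure hx)
    have h3 : 1 ≤ exp (A * t) := one_le_exp (mul_nonneg hA ht.1.le)
    have h4 : exp (A * (T / 2)) ≤ exp (A * T) := exp_le_exp.2 (by nlinarith)
    have h5 : ∫ x in Ω, q (t, x) ≤ exp (A * T) * ∫ x in Ω, q (T / 2, x) :=
      (le_mul_of_one_le_left p1 h3).trans (h1.trans (mul_le_mul_of_nonneg_right h4 p2))
    rw [show 2 * (A * T) = A * T + A * T by ring, exp_add, ← sq, ← mul_pow]
    exact pow_le_pow_left₀ p1 h5 2
  set m1 := ∫ x in Ω, q (T / 2, x)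
  have key := aux_gron (F := fun t => - ((T / 2 - t) ^ k * ∫ x in Ω, q (t, x) ^ 2))
    (F' := fun t => - (k * (T / 2 - t) ^ (k - 1) * (-1) * (∫ x in Ω, q (t, x) ^ 2) +
      (T / 2 - t) ^ k * ∫ x in Ω, 2 * q (t, x) * qt (t, x)))
    (κ := 2 * A) (a := 0) (b := T / 2)
    (h := fun _ => C3 * (exp (2 * (A * T)) * m1 ^ 2)) (by linarith) ?_ ?_ continuousOn_const ?_
  · simp only [sub_self, zero_pow (show k ≠ 0 by omega), zero_mul, neg_zero, mul_zero, exp_zero,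
      one_mul, sub_zero, sub_neg_eq_add, zero_add] at key
    have r1 : ∫ t in (0:ℝ)..(T / 2), exp (2 * A * t) * (C3 * (exp (2 * (A * T)) * m1 ^ 2)) ≤
        exp (4 * (T * A)) * (C3 * m1 ^ 2) := by
      have r2 : ∫ t in (0:ℝ)..(T / 2), exp (2 * A * t) * (C3 * (exp (2 * (A * T)) * m1 ^ 2)) ≤
          ∫ t in (0:ℝ)..(T / 2), exp (2 * (T * A)) * (C3 * (exp (2 * (A * T)) * m1 ^ 2)) := by
        refine intervalIntegral.integral_mono_on (by linarith) ?_ ?_ fun t ht => ?_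
        · apply Continuous.intervalIntegrable; fun_prop
        · exact intervalIntegrable_const
        · have : exp (2 * A * t) ≤ exp (2 * (T * A)) := exp_le_exp.2 (by nlinarith [ht.2])
          gcongr
      refine r2.trans ?_
      rw [intervalIntegral.integral_const, smul_eq_mul, sub_zero]
      have e : exp (4 * (T * A)) = exp (2 * (T * A)) * exp (2 * (A * T)) := by
        rw [← exp_add]; ring_nf
      rw [e]
      calc T / 2 * (exp (2 * (T * A)) * (C3 * (exp (2 * (A * T)) * m1 ^ 2)))
          ≤ 1 * (exp (2 * (T * A)) * (C3 * (exp (2 * (A * T)) * m1 ^ 2))) := by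
            gcongr; linarith
        _ = _ := by ring
    have r3 := key.trans r1
    set y0 := ∫ x in Ω, q (0, x) ^ 2
    have r4 : y0 ≤ (2 / T) ^ k * (exp (4 * (T * A)) * (C3 * m1 ^ 2)) := by
      have := mul_le_mul_of_nonneg_left r3 (show 0 ≤ (2 / T) ^ k by positivity)
      rw [← mul_assoc, ← mul_pow, show 2 / T * (T / 2) = 1 by field_simp, one_pow, one_mul] at this
      exact this
    refine r4.trans ?_
    have x1 : (2 / T) ^ k ≤ exp (2 * k * (1 / T)) := by
      have : 2 / T ≤ exp (2 / T) := by linarith [add_one_le_exp (2 / T)]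
      refine (pow_le_pow_left₀ (by positivity) this k).trans_eq ?_
      rw [← exp_nat_mul]; congr 1; ring
    have x2 : C3 ≤ exp C3 := by linarith [add_one_le_exp C3]
    calc (2 / T) ^ k * (exp (4 * (T * A)) * (C3 * m1 ^ 2))
        ≤ exp (2 * k * (1 / T)) * (exp (4 * (T * A)) * (exp C3 * m1 ^ 2)) := by gcongr
      _ = exp (2 * k * (1 / T) + 4 * (T * A) + C3) * m1 ^ 2 := by rw [exp_add, exp_add]; ring
      _ ≤ _ := by
        gcongr
        have i1 : 0 < 1 / T := by positivity
        have i2 : 0 ≤ T * A := by positivity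
        have i3 : 0 ≤ √A := sqrt_nonneg A
        have z1 : 2 * k * (1 / T) ≤ 2 * k * (1 + 1 / T + T * A + √A) := by gcongr; linarith
        have z2 : C3 * 1 ≤ C3 * (1 + 1 / T + T * A + √A) := by gcongr; linarith
        linarith
  · refine ContinuousOn.neg (ContinuousOn.mul (Continuous.continuousOn (by fun_prop)) ?_)
    exact hyc.mono (Icc_subset_Icc_right (by linarith))
  · intro t ht
    have ht' : t ∈ Ioo 0 T := ⟨ht.1, by linarith [ht.2]⟩
    have d1 : HasDerivAt (fun t : ℝ => (T / 2 - t) ^ k) (k * (T / 2 - t) ^ (k - 1) * (-1)) t :=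
      ((hasDerivAt_id t).const_sub (T / 2)).pow k
    exact (d1.mul (hyd t ht')).neg
  · intro t ht
    have ht' : t ∈ Ioo 0 T := ⟨ht.1, by linarith [ht.2]⟩
    have hτ : 0 < T / 2 - t := by linarith [ht.2]
    have hτ1 : T / 2 - t ≤ 1 / 2 := by linarith [ht.1]
    set τ := T / 2 - t
    set δ := √(2 * τ / (k * C1)) with hδ
    have hδp : 0 < δ := sqrt_pos.2 (by positivity)
    have hδ2 : δ ^ 2 = 2 * τ / (k * C1) := sq_sqrt (by positivity)
    have hδle : δ ^ 2 ≤ 1 / (k * C1) := by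
      rw [hδ2]; gcongr; linarith
    have b1 : δ ≤ 1 := by
      have : δ ^ 2 ≤ 1 ^ 2 := hδle.trans (by
        rw [div_le_iff₀ hC1] at hk3
        rw [div_le_iff₀ (by positivity)]; linarith)
      exact le_of_sq_le_sq this (by norm_num)
    have b2 : δ ≤ δ₀ := by
      have : δ ^ 2 ≤ δ₀ ^ 2 := hδle.trans (by
        rw [div_le_iff₀ (by positivity)] at hk2
        rw [div_le_iff₀ (by positivity)]; linarith)
      exact le_of_sq_le_sq this hδ₀.le
    have n1 := hN δ hδp b2 (fun z => q (t, z)) (h.c2 t ht').d1 (h.c2 t ht').c1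
      (h.nn t (Ioo_subset_Icc_self ht'))
    have n2 := aux_smooth_param hk1 hC1 hC2 hτ (by linarith) hδp b1 hδ2 n1
    have n3 := aux_smooth_diff hD h ht'
    have n4 := mul_le_mul_of_nonneg_left n3 (show 0 ≤ τ ^ k by positivity)
    have n5 := mul_le_mul_of_nonneg_left (hmass t ht) hC3p.le
    rw [← hC3] at n2
    linarith

lemma aux_cs {N : ℕ} {Ω ω : Set (EuclideanSpace ℝ (Fin N))} (hΩb : Bornology.IsBounded Ω)
    (hω : IsOpen ω) (hωΩ : ω ⊆ Ω)
    {q : ℝ × EuclideanSpace ℝ (Fin N) → ℝ} {T : ℝ} (hT : 0 < T) (hT1 : T ≤ 1)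
    (hq : ContinuousOn q (Icc 0 T ×ˢ closure Ω)) :
    (∫ t in (0:ℝ)..T, ∫ x in ω, q (t, x)) ^ 2 ≤
      (1 + (volume ω).toReal) * ∫ t in (0:ℝ)..T, ∫ x in ω, q (t, x) ^ 2 := by
  have hcl : IsCompact (closure Ω) := hΩb.isCompact_closure
  have hωc := hωΩ.trans subset_closure
  have hfin : volume ω < ⊤ := (measure_mono hωc).trans_lt hcl.measure_lt_top
  set V := (volume ω).toReal with hV
  have hV0 : 0 ≤ V := ENNReal.toReal_nonneg
  set V' := 1 + V
  have hV' : 0 < V' := by positivity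
  have c1 := aux_time_cont hω.measurableSet hcl hωc hq
  have c2 := aux_time_cont hω.measurableSet hcl hωc (hq.pow 2)
  simp only [Pi.pow_apply] at c2
  have w1 : IntervalIntegrable (fun t => ∫ x in ω, q (t, x)) volume 0 T := by
    apply ContinuousOn.intervalIntegrable; rwa [uIcc_of_le hT.le]
  have w2 : IntervalIntegrable (fun t => ∫ x in ω, q (t, x) ^ 2) volume 0 T := by
    apply ContinuousOn.intervalIntegrable; rwa [uIcc_of_le hT.le]
  set J := ∫ t in (0:ℝ)..T, ∫ x in ω, q (t, x)
  set L := J / V'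
  have hpt : ∀ t ∈ Icc 0 T, 2 * L * (∫ x in ω, q (t, x)) - L ^ 2 * V ≤ ∫ x in ω, q (t, x) ^ 2 := by
    intro t ht
    have hc : ContinuousOn (fun x => q (t, x)) (closure Ω) :=
      hq.comp (by fun_prop) (fun x hx => ⟨ht, hx⟩)
    have i1 : IntegrableOn (fun x => q (t, x)) ω := (hc.integrableOn_compact hcl).mono_set hωc
    have i2 : IntegrableOn (fun x => q (t, x) ^ 2) ω := ((hc.pow 2).integrableOn_compact hcl).mono_set hωc
    have i3 : IntegrableOn (fun _ : EuclideanSpace ℝ (Fin N) => L ^ 2) ω := integrableOn_const hfin.ne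
    have : ∫ x in ω, (2 * L * q (t, x) - L ^ 2) ≤ ∫ x in ω, q (t, x) ^ 2 := by
      refine setIntegral_mono_on ((i1.const_mul (2 * L)).sub i3) i2 hω.measurableSet fun x _ => ?_
      nlinarith [sq_nonneg (q (t, x) - L)]
    rw [integral_sub (i1.const_mul (2 * L)) i3, integral_const_mul, setIntegral_const, smul_eq_mul,
      measureReal_def, ← hV] at this
    linarith
  have hI : ∫ t in (0:ℝ)..T, (2 * L * (∫ x in ω, q (t, x)) - L ^ 2 * V) ≤
      ∫ t in (0:ℝ)..T, ∫ x in ω, q (t, x) ^ 2 :=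
    intervalIntegral.integral_mono_on hT.le ((w1.const_mul _).sub intervalIntegrable_const) w2 hpt
  rw [intervalIntegral.integral_sub (w1.const_mul _) intervalIntegrable_const,
    intervalIntegral.integral_const_mul, intervalIntegral.integral_const, smul_eq_mul, sub_zero] at hI
  have e1 : T * (L ^ 2 * V) ≤ L ^ 2 * V' := by
    have : L ^ 2 * V ≤ L ^ 2 * V' := by
      apply mul_le_mul_of_nonneg_left _ (sq_nonneg L); simp only [V']; linarith
    have h2 : 0 ≤ L ^ 2 * V := by positivity
    nlinarith
  have e2 : L * V' = J := by simp only [L]; field_simp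
  change 2 * L * J - T * (L ^ 2 * V) ≤ _ at hI
  have e3 : L * J ≤ ∫ t in (0:ℝ)..T, ∫ x in ω, q (t, x) ^ 2 := by
    have : L ^ 2 * V' = L * J := by rw [← e2]; ring
    linarith
  have := mul_le_mul_of_nonneg_left e3 hV'.le
  calc J ^ 2 = V' * (L * J) := by rw [← mul_assoc, mul_comm V', e2, sq]
    _ ≤ _ := this

lemma aux_remove_a {N : ℕ} {Ω : Set (EuclideanSpace ℝ (Fin N))} (hΩo : IsOpen Ω) {T : ℝ}
    {a : ℝ × EuclideanSpace ℝ (Fin N) → ℝ}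
    (hab : ∃ B : ℝ, ∀ p ∈ Set.Ioo (0:ℝ) T ×ˢ Ω, |a p| ≤ B)
    {q r : ℝ × EuclideanSpace ℝ (Fin N) → ℝ}
    (hq : ContinuousOn q (Ioo (0:ℝ) T ×ˢ Ω)) (hr : ContinuousOn r (Ioo (0:ℝ) T ×ˢ Ω))
    (hq0 : ∀ p ∈ Ioo (0:ℝ) T ×ˢ Ω, 0 ≤ q p)
    (he : ∀ p ∈ Ioo (0:ℝ) T ×ˢ Ω, r p = a p * q p) :
    ∀ p ∈ Ioo (0:ℝ) T ×ˢ Ω,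
      |r p| ≤ (eLpNorm a ⊤ (volume.restrict (Ioo (0:ℝ) T ×ˢ Ω))).toReal * q p := by
  set U := Ioo (0:ℝ) T ×ˢ Ω with hU
  have hUo : IsOpen U := isOpen_Ioo.prod hΩo
  set A := (eLpNorm a ⊤ (volume.restrict U)).toReal with hA
  obtain ⟨B, hB⟩ := hab
  have hbd : ∀ᵐ p ∂(volume.restrict U), ‖a p‖ ≤ B :=
    (ae_restrict_iff' hUo.measurableSet).2 (Filter.Eventually.of_forall hB)
  have hfin : eLpNorm a ⊤ (volume.restrict U) ≠ ⊤ := by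
    rw [eLpNorm_exponent_top]
    exact (eLpNormEssSup_lt_top_of_ae_bound hbd).ne
  have hae : ∀ᵐ p ∂(volume.restrict U), |a p| ≤ A := by
    filter_upwards [ae_le_eLpNormEssSup (f := a) (μ := volume.restrict U)] with p hp
    rw [← eLpNorm_exponent_top] at hp
    have := ENNReal.toReal_mono hfin hp
    rwa [toReal_enorm, norm_eq_abs] at this
  intro p hp
  by_contra hcon
  push Not at hcon
  have hgc : ContinuousOn (fun p => A * q p - |r p|) U := (continuousOn_const.mul hq).sub hr.abs
  have hVo : IsOpen (U ∩ (fun p => A * q p - |r p|) ⁻¹' Iio 0) := hgc.isOpen_inter_preimage hUo isOpen_Iio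
  have hpos := hVo.measure_pos volume ⟨p, hp, by simp only [mem_preimage, mem_Iio]; linarith⟩
  rw [ae_restrict_iff' hUo.measurableSet] at hae
  have hz : volume (U ∩ (fun p => A * q p - |r p|) ⁻¹' Iio 0) = 0 := by
    refine measure_mono_null ?_ (ae_iff.1 hae)
    rintro x ⟨hx, hx2⟩ hcon2
    have h1 := hcon2 hx
    simp only [mem_preimage, mem_Iio] at hx2
    rw [he x hx, abs_mul, abs_of_nonneg (hq0 x hx)] at hx2
    have := mul_le_mul_of_nonneg_right h1 (hq0 x hx)
    linarith
  exact hpos.ne' hz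

theorem observability_L2_L2_neumann
    (N : ℕ) (hN : 1 ≤ N)
    (Ω ω₀ ω : Set (EuclideanSpace ℝ (Fin N)))
    (hΩo : IsOpen Ω) (hΩb : Bornology.IsBounded Ω) (hΩc : IsConnected Ω)
    (hω₀o : IsOpen ω₀) (hω₀ne : ω₀.Nonempty) (hωo : IsOpen ω) (hωne : ω.Nonempty)
    (hω₀ω : closure ω₀ ⊆ ω) (hωΩ : ω ⊆ Ω)
    (η : EuclideanSpace ℝ (Fin N) → ℝ) (hη : ContDiff ℝ 2 η)
    (hηpos : ∀ x ∈ Ω, 0 < η x) (hηbd : ∀ x ∈ frontier Ω, η x = 0)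
    (hηgrad : ∀ x ∈ closure (Ω \ ω₀), 0 < ‖gradient η x‖) :
    ∃ C > (0:ℝ),
      ∀ T : ℝ, 0 < T →
      ∀ a : ℝ × EuclideanSpace ℝ (Fin N) → ℝ, Measurable a →
      (∃ B : ℝ, ∀ p ∈ Set.Ioo (0:ℝ) T ×ˢ Ω, |a p| ≤ B) →
      ∀ q qt : ℝ × EuclideanSpace ℝ (Fin N) → ℝ,
        ContinuousOn q (Set.Icc 0 T ×ˢ closure Ω) →
        (∀ p ∈ Set.Icc 0 T ×ˢ closure Ω, 0 ≤ q p) →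
        (∀ p ∈ Set.Ioo 0 T ×ˢ closure Ω,
          HasDerivAt (fun τ => q (τ, p.2)) (qt p) p.1) →
        ContinuousOn qt (Set.Ioo 0 T ×ˢ closure Ω) →
        (∀ p ∈ Set.Ioo 0 T ×ˢ closure Ω,
          DifferentiableAt ℝ (fun z => q (p.1, z)) p.2) →
        (∀ p ∈ Set.Ioo 0 T ×ˢ closure Ω,
          DifferentiableAt ℝ (fun y => fderiv ℝ (fun z => q (p.1, z)) y) p.2) →
        ContinuousOn (fun p : ℝ × EuclideanSpace ℝ (Fin N) =>
          fderiv ℝ (fun z => q (p.1, z)) p.2) (Set.Ioo 0 T ×ˢ closure Ω) →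
        ContinuousOn (fun p : ℝ × EuclideanSpace ℝ (Fin N) =>
          fderiv ℝ (fun y => fderiv ℝ (fun z => q (p.1, z)) y) p.2)
          (Set.Ioo 0 T ×ˢ closure Ω) →
        (∀ t ∈ Set.Ioo (0:ℝ) T, ∀ x ∈ Ω,
          -qt (t, x) - spaceLaplacian (fun z => q (t, z)) x
            + a (t, x) * q (t, x) = 0) →
        (∀ t ∈ Set.Ioo (0:ℝ) T, ∀ x ∈ frontier Ω,
          ⟪gradient (fun z => q (t, z)) x, gradient η x⟫ = 0) →
        (∫ x in Ω, q (0, x) ^ 2)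
          ≤ Real.exp (C * (1 + 1/T + T * (eLpNorm a ⊤ (volume.restrict (Set.Ioo (0:ℝ) T ×ˢ Ω))).toReal + Real.sqrt (eLpNorm a ⊤ (volume.restrict (Set.Ioo (0:ℝ) T ×ˢ Ω))).toReal)) *
            ∫ t in Set.Ioo (0:ℝ) T, ∫ x in ω, q (t, x) ^ 2 := by
  have hD : DomHyp Ω ω₀ η :=
    ⟨hΩo, hΩb, hω₀o, hω₀ω.trans hωΩ, hη, hηpos, hηbd, hηgrad⟩
  obtain ⟨K1, hK1, hobs⟩ := aux_L1obs hD hωo (subset_closure.trans hω₀ω) hωΩ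
  obtain ⟨K2, hK2, hsm⟩ := aux_smooth hD
  set V := 1 + (volume ω).toReal with hV
  have hV0 : 0 < V := by have : 0 ≤ (volume ω).toReal := ENNReal.toReal_nonneg; positivity
  refine ⟨2 * (K2 + 2 * K1) + V, by positivity, ?_⟩
  intro T hT a _ hab q qt hqc hq0 hqd hqtc hd1 hd2 hc1 hc2 heq hbd
  have hcont2 : ∀ t ∈ Ioo 0 T, C2cl Ω (fun z => q (t, z)) := fun t ht =>
    ⟨fun x hx => hd1 (t, x) ⟨ht, hx⟩, fun x hx => hd2 (t, x) ⟨ht, hx⟩,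
      hc1.comp (f := fun x => (t, x)) (by fun_prop) (fun x hx => ⟨ht, hx⟩),
      hc2.comp (f := fun x => (t, x)) (by fun_prop) (fun x hx => ⟨ht, hx⟩)⟩
  have hsubU : Ioo (0:ℝ) T ×ˢ Ω ⊆ Ioo (0:ℝ) T ×ˢ closure Ω := prod_mono subset_rfl subset_closure
  have hlapc : ContinuousOn (fun p : ℝ × EuclideanSpace ℝ (Fin N) =>
      spaceLaplacian (fun z => q (p.1, z)) p.2) (Ioo (0:ℝ) T ×ˢ Ω) := by
    have : ContinuousOn (fun p : ℝ × EuclideanSpace ℝ (Fin N) =>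
        ∑ i, fderiv ℝ (fderiv ℝ (fun z => q (p.1, z))) p.2 (EuclideanSpace.single i 1)
          (EuclideanSpace.single i 1)) (Ioo (0:ℝ) T ×ˢ Ω) :=
      continuousOn_finsetSum _ fun i _ =>
        ((hc2.mono hsubU).clm_apply continuousOn_const).clm_apply continuousOn_const
    refine this.congr fun p hp => ?_
    exact (hcont2 p.1 hp.1).lap (subset_closure hp.2)
  have hr := aux_remove_a hΩo hab (q := q)
    (r := fun p => qt p + spaceLaplacian (fun z => q (p.1, z)) p.2)
    (hqc.mono (prod_mono Ioo_subset_Icc_self subset_closure)) ((hqtc.mono hsubU).add hlapc)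
    (fun p hp => hq0 p ⟨Ioo_subset_Icc_self hp.1, subset_closure hp.2⟩)
    (fun p hp => by have := heq p.1 hp.1 p.2 hp.2; simp only [Prod.mk.eta] at this ⊢; linarith)
  set A := (eLpNorm a ⊤ (volume.restrict (Set.Ioo (0:ℝ) T ×ˢ Ω))).toReal with hA
  have hA0 : 0 ≤ A := ENNReal.toReal_nonneg
  have hS : SolHyp Ω η T A q qt :=
    ⟨hqc, fun t ht x hx => hq0 (t, x) ⟨ht, hx⟩, fun t ht x hx => hqd (t, x) ⟨ht, hx⟩, hqtc, hcont2,
      fun t ht x hx => hr (t, x) ⟨ht, hx⟩, hbd⟩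
  set T' := min T 1 with hT'
  have hTp : 0 < T' := lt_min hT one_pos
  have hT1 : T' ≤ 1 := min_le_right _ _
  have hTT : T' ≤ T := min_le_left _ _
  have hS' := hS.mono hTT
  have s1 := hsm T' A hTp hT1 hA0 q qt hS'
  have s2 := hobs T' A hTp hT1 hA0 q qt hS'
  have s3 := aux_cs hΩb hωo hωΩ hTp hT1 hS'.cont
  rw [← hV] at s3
  have hcl : IsCompact (closure Ω) := hΩb.isCompact_closure
  have hc2' : ContinuousOn (fun t => ∫ x in ω, q (t, x) ^ 2) (Icc 0 T) :=
    aux_time_cont (f := fun p => q p ^ 2) hωo.measurableSet hcl (hωΩ.trans subset_closure) (hqc.pow 2)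
  have s4 : ∫ t in (0:ℝ)..T', ∫ x in ω, q (t, x) ^ 2 ≤ ∫ t in Ioo (0:ℝ) T, ∫ x in ω, q (t, x) ^ 2 := by
    rw [← integral_Ioc_eq_integral_Ioo, ← intervalIntegral.integral_of_le hT.le]
    refine intervalIntegral.integral_mono_interval le_rfl hTp.le hTT ?_ ?_
    · exact Filter.Eventually.of_forall fun t => integral_nonneg fun x => sq_nonneg _
    · apply ContinuousOn.intervalIntegrable; rwa [uIcc_of_le hT.le]
  set I := ∫ t in Ioo (0:ℝ) T, ∫ x in ω, q (t, x) ^ 2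
  have hI0 : 0 ≤ I := setIntegral_nonneg measurableSet_Ioo fun t _ => integral_nonneg fun x => sq_nonneg _
  have m0 : 0 ≤ ∫ x in Ω, q (T' / 2, x) := setIntegral_nonneg hΩo.measurableSet
    fun x hx => hS'.nn _ ⟨by linarith, by linarith⟩ x (subset_closure hx)
  set Z := 1 + 1 / T + T * A + √A with hZ
  set Z' := 1 + 1 / T' + T' * A + √A with hZ'
  have r0 : 0 ≤ √A := sqrt_nonneg A
  have iT : 0 < 1 / T := by positivity
  have tA : 0 ≤ T * A := by positivity
  have hZ1 : 1 ≤ Z := by linarith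
  have hZZ : Z' ≤ 2 * Z := by
    have h1 : 1 / T' ≤ 1 + 1 / T := by
      rcases min_choice T 1 with h | h
      · rw [hT', h]; linarith
      · rw [hT', h]; linarith
    have h2 : T' * A ≤ T * A := mul_le_mul_of_nonneg_right hTT hA0
    linarith
  calc ∫ x in Ω, q (0, x) ^ 2 ≤ exp (K2 * Z') * (∫ x in Ω, q (T' / 2, x)) ^ 2 := s1
    _ ≤ exp (K2 * Z') * (exp (K1 * Z') * ∫ t in (0:ℝ)..T', ∫ x in ω, q (t, x)) ^ 2 :=
      mul_le_mul_of_nonneg_left (pow_le_pow_left₀ m0 s2 2) (exp_pos _).le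
    _ = exp (K2 * Z') * exp (K1 * Z') ^ 2 * (∫ t in (0:ℝ)..T', ∫ x in ω, q (t, x)) ^ 2 := by ring
    _ ≤ exp (K2 * Z') * exp (K1 * Z') ^ 2 * (V * I) := by
      refine mul_le_mul_of_nonneg_left (s3.trans ?_) (by positivity)
      exact mul_le_mul_of_nonneg_left s4 hV0.le
    _ ≤ exp (K2 * Z') * exp (K1 * Z') ^ 2 * (exp V * I) := by
      have : V ≤ exp V := by linarith [add_one_le_exp V]
      refine mul_le_mul_of_nonneg_left (mul_le_mul_of_nonneg_right this hI0) (by positivity)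
    _ = exp (K2 * Z' + K1 * Z' + K1 * Z' + V) * I := by
      rw [exp_add (K2 * Z' + K1 * Z' + K1 * Z') V, exp_add (K2 * Z' + K1 * Z') (K1 * Z'),
        exp_add (K2 * Z') (K1 * Z')]
      ring
    _ ≤ _ := by
      refine mul_le_mul_of_nonneg_right (exp_le_exp.2 ?_) hI0
      have y1 : (K2 + 2 * K1) * Z' ≤ (K2 + 2 * K1) * (2 * Z) := by gcongr
      have y2 : V * 1 ≤ V * Z := by gcongr
      linarith
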